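/- arXiv:2310.09227 — 2 statements merged into one kernel-verified Lean document; each statement's English description precedes it below -/
import Mathlib

section
/- Let 0 ≤ i ≤ j be integers with 2j + i ≤ n. Let R be the collection of all rows of the matrices W_{s,j} for 0 ≤ s ≤ i, regarded as vectors indexed by the standard j-element subsets of {1,…,n}. Then: (a) every integer vector lying in the ℚ-linear span of R already lies in the ℤ-linear span of R (the stacked matrix M_{i,j} has index 1); and (b) the ℚ-linear span of R has dimension μ_i(n) = C(n,i) − C(n,i−1). -/
open scoped Classical

/-- Integer binomial coefficient with the convention `C x y = 0` unless `0 ≤ y ≤ x`. -/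
noncomputable def C (x y : ℤ) : ℤ :=
  if 0 ≤ y ∧ y ≤ x then (x.toNat).choose y.toNat else 0

/-- `μ_s(n) = C(n,s) − C(n,s−1)`. -/
noncomputable def mu (n : ℕ) (s : ℤ) : ℤ := C n s - C n (s - 1)

/-- A finset `β = {b₁ < b₂ < … < b_m}` of naturals is *standard* if `bᵢ ≥ 2i` for all `i`. -/
def IsStandard (β : Finset ℕ) : Prop :=
  ∀ i < β.card, 2 * (i + 1) ≤ (β.sort (· ≤ ·)).getD i 0

/-- The standard `k`-element subsets of `{1,…,n}`. -/
noncomputable def stdSets (n k : ℕ) : Finset (Finset ℕ) :=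
  (Finset.Icc 1 n).powerset.filter fun β => IsStandard β ∧ β.card = k

lemma sort_insert_max (n : ℕ) (β : Finset ℕ) (h : ∀ x ∈ β, x < n) :
    (insert n β).sort (· ≤ ·) = β.sort (· ≤ ·) ++ [n] := by
  have hn : n ∉ β := fun hh => lt_irrefl _ (h n hh)
  have hnd : (β.sort (· ≤ ·) ++ [n]).Nodup := by
    rw [List.nodup_append]
    refine ⟨Finset.sort_nodup _ _, by simp, ?_⟩
    intro a ha b hb
    simp at ha hb
    have := h a ha
    omega
  have hs : (β.sort (· ≤ ·) ++ [n]).Pairwise (· ≤ ·) := by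
    rw [List.pairwise_append]
    refine ⟨Finset.pairwise_sort _ _, by simp, ?_⟩
    intro a ha b hb
    simp at ha hb
    have := h a ha
    omega
  refine List.Perm.eq_of_pairwise (le := (· ≤ ·)) ?_ (Finset.pairwise_sort _ _) hs ?_
  · intro a b _ _ h1 h2
    exact le_antisymm h1 h2
  · rw [List.perm_ext_iff_of_nodup (Finset.sort_nodup _ _) hnd]
    intro a
    simp [or_comm]

lemma isStandard_insert (n : ℕ) (β : Finset ℕ) (h : ∀ x ∈ β, x < n) :
    IsStandard (insert n β) ↔ IsStandard β ∧ 2 * (β.card + 1) ≤ n := by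
  have hn : n ∉ β := fun hh => lt_irrefl _ (h n hh)
  unfold IsStandard
  rw [sort_insert_max n β h, Finset.card_insert_of_notMem hn]
  constructor
  · intro H
    constructor
    · intro i hi
      have := H i (by omega)
      rwa [List.getD_append _ _ _ _ (by simpa using hi)] at this
    · have := H β.card (by omega)
      rw [List.getD_append_right _ _ _ _ (by simp)] at this
      simpa using this
  · rintro ⟨H1, H2⟩ i hi
    by_cases hi' : i < β.card
    · rw [List.getD_append _ _ _ _ (by simpa using hi')]
      exact H1 i hi'
    · have : i = β.card := by omega
      subst this
      rw [List.getD_append_right _ _ _ _ (by simp)]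
      simpa using H2

lemma isStandard_empty : IsStandard ∅ := by
  intro i hi
  simp at hi

lemma isStandard_subset (β : Finset ℕ) : ∀ α ⊆ β, IsStandard β → IsStandard α := by
  induction β using Finset.induction_on_max with
  | empty =>
    intro α hα _
    rw [Finset.subset_empty.1 hα]
    exact isStandard_empty
  | insert n β hn ih =>
    intro α hα hs
    rw [isStandard_insert n β hn] at hs
    have he : α.erase n ⊆ β := by
      rw [← Finset.subset_insert_iff]
      exact hα
    have h1 := ih _ he hs.1
    by_cases hm : n ∈ α
    · rw [← Finset.insert_erase hm, isStandard_insert n _ (fun x hx => hn x (he hx))]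
      refine ⟨h1, ?_⟩
      have := Finset.card_le_card he
      omega
    · rwa [Finset.erase_eq_of_notMem hm] at h1

lemma mem_stdSets {n k : ℕ} {β : Finset ℕ} :
    β ∈ stdSets n k ↔ β ⊆ Finset.Icc 1 n ∧ IsStandard β ∧ β.card = k := by
  simp [stdSets]

lemma lt_of_sub {n : ℕ} {β : Finset ℕ} (h : β ⊆ Finset.Icc 1 n) : ∀ x ∈ β, x < n + 1 := by
  intro x hx
  have := Finset.mem_Icc.1 (h hx)
  omega

lemma notMem_of_sub {n : ℕ} {β : Finset ℕ} (h : β ⊆ Finset.Icc 1 n) : n + 1 ∉ β :=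
  fun hx => lt_irrefl _ (lt_of_sub h _ hx)

lemma Icc_sub (n : ℕ) : Finset.Icc 1 n ⊆ Finset.Icc 1 (n + 1) :=
  Finset.Icc_subset_Icc_right (Nat.le_succ n)

lemma insert_sub {n : ℕ} {β : Finset ℕ} (h : β ⊆ Finset.Icc 1 n) :
    insert (n + 1) β ⊆ Finset.Icc 1 (n + 1) := by
  intro x hx
  rcases Finset.mem_insert.1 hx with rfl | hx
  · simp
  · exact Icc_sub n (h hx)

lemma stdSets_mono {n k : ℕ} : stdSets n k ⊆ stdSets (n + 1) k := by
  intro β hβ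
  rw [mem_stdSets] at hβ ⊢
  exact ⟨hβ.1.trans (Icc_sub n), hβ.2⟩

lemma insert_mem_stdSets {n k : ℕ} (hk : 2 * (k + 1) ≤ n + 1) {β : Finset ℕ}
    (hβ : β ∈ stdSets n k) : insert (n + 1) β ∈ stdSets (n + 1) (k + 1) := by
  rw [mem_stdSets] at hβ ⊢
  refine ⟨insert_sub hβ.1, ?_, ?_⟩
  · rw [isStandard_insert _ _ (lt_of_sub hβ.1)]
    exact ⟨hβ.2.1, by rw [hβ.2.2]; exact hk⟩
  · rw [Finset.card_insert_of_notMem (notMem_of_sub hβ.1), hβ.2.2]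

lemma insert_injOn (n : ℕ) (S : Finset (Finset ℕ)) (h : ∀ β ∈ S, β ⊆ Finset.Icc 1 n) :
    Set.InjOn (fun β : Finset ℕ => insert (n + 1) β) (S : Set (Finset ℕ)) := by
  intro a ha b hb hab
  have h1 := notMem_of_sub (h a ha)
  have h2 := notMem_of_sub (h b hb)
  have := congrArg (fun s => Finset.erase s (n + 1)) hab
  simpa [Finset.erase_insert h1, Finset.erase_insert h2] using this

lemma card_union_insert (n : ℕ) (S T : Finset (Finset ℕ)) (hS : ∀ β ∈ S, β ⊆ Finset.Icc 1 n)
    (hT : ∀ β ∈ T, β ⊆ Finset.Icc 1 n) :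
    (S ∪ T.image (fun β => insert (n + 1) β)).card = S.card + T.card := by
  rw [Finset.card_union_of_disjoint, Finset.card_image_of_injOn (insert_injOn n T hT)]
  rw [Finset.disjoint_left]
  intro a ha hb
  obtain ⟨b, _, rfl⟩ := Finset.mem_image.1 hb
  exact notMem_of_sub (hS _ ha) (Finset.mem_insert_self _ _)

lemma stdSets_succ {n k : ℕ} (hk : 2 * (k + 1) ≤ n + 1) :
    stdSets (n + 1) (k + 1) =
      stdSets n (k + 1) ∪ (stdSets n k).image (fun β => insert (n + 1) β) := by
  ext β
  rw [Finset.mem_union, Finset.mem_image]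
  constructor
  · intro hβ
    have hβ' := mem_stdSets.1 hβ
    have he : β.erase (n + 1) ⊆ Finset.Icc 1 n := by
      intro x hx
      rw [Finset.mem_erase] at hx
      have := Finset.mem_Icc.1 (hβ'.1 hx.2)
      rw [Finset.mem_Icc]
      omega
    by_cases hm : n + 1 ∈ β
    · right
      refine ⟨β.erase (n + 1), mem_stdSets.2 ⟨he, ?_, ?_⟩, Finset.insert_erase hm⟩
      · exact isStandard_subset β _ (Finset.erase_subset _ _) hβ'.2.1
      · rw [Finset.card_erase_of_mem hm, hβ'.2.2]
        rfl
    · left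
      rw [Finset.erase_eq_of_notMem hm] at he
      exact mem_stdSets.2 ⟨he, hβ'.2⟩
  · rintro (hβ | ⟨b, hb, rfl⟩)
    · exact stdSets_mono hβ
    · exact insert_mem_stdSets hk hb

lemma card_stdSets_succ {n k : ℕ} (hk : 2 * (k + 1) ≤ n + 1) :
    (stdSets (n + 1) (k + 1)).card = (stdSets n (k + 1)).card + (stdSets n k).card := by
  rw [stdSets_succ hk]
  exact card_union_insert n _ _ (fun β hβ => (mem_stdSets.1 hβ).1)
    (fun β hβ => (mem_stdSets.1 hβ).1)

lemma card_stdSets_zero (n : ℕ) : (stdSets n 0).card = 1 := by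
  rw [Finset.card_eq_one]
  refine ⟨∅, ?_⟩
  ext β
  rw [mem_stdSets, Finset.mem_singleton, Finset.card_eq_zero]
  constructor
  · exact fun h => h.2.2
  · rintro rfl
    exact ⟨by simp, isStandard_empty, rfl⟩

lemma stdSets_empty {n k : ℕ} (hk : n < 2 * (k + 1)) : stdSets n (k + 1) = ∅ := by
  rw [Finset.eq_empty_iff_forall_notMem]
  intro β hβ
  obtain ⟨h1, h2, h3⟩ := mem_stdSets.1 hβ
  have h4 := h2 k (by omega)
  rw [List.getD_eq_getElem _ _ (by simp [h3])] at h4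
  have h5 : (β.sort (· ≤ ·))[k]'(by simp [h3]) ∈ β := by
    rw [← Finset.mem_sort (· ≤ ·)]
    exact List.getElem_mem _
  have := lt_of_sub h1 _ h5
  omega

lemma card_stdSets_aux (n : ℕ) : ∀ k, 2 * (k + 1) ≤ n + 1 →
    (stdSets n (k + 1)).card + n.choose k = n.choose (k + 1) := by
  induction n with
  | zero => intro k hk; omega
  | succ n ih =>
    intro k hk
    by_cases hk' : 2 * (k + 1) ≤ n + 1
    · rw [card_stdSets_succ hk', Nat.choose_succ_succ' n k]
      have h1 := ih k hk'
      cases k with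
      | zero =>
        rw [card_stdSets_zero]
        simp at h1 ⊢
        omega
      | succ k =>
        have h2 := ih k (by omega)
        rw [Nat.choose_succ_succ' n k]
        omega
    · rw [stdSets_empty (by omega)]
      simp only [Finset.card_empty, zero_add]
      apply Nat.choose_symm_of_eq_add
      omega

lemma card_stdSets (n i : ℕ) (h : 2 * i ≤ n) : ((stdSets n i).card : ℤ) = mu n i := by
  cases i with
  | zero =>
    rw [card_stdSets_zero]
    simp [mu, C]
  | succ k =>
    have h1 := card_stdSets_aux n k (by omega)
    have e1 : C n ((k + 1 : ℕ) : ℤ) = (n.choose (k + 1) : ℤ) := by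
      unfold C
      rw [if_pos (by omega)]
      simp
    have e2 : C n (((k + 1 : ℕ) : ℤ) - 1) = (n.choose k : ℤ) := by
      have : (((k + 1 : ℕ) : ℤ) - 1) = (k : ℤ) := by push_cast; ring
      unfold C
      rw [this, if_pos (by omega)]
      simp
    rw [mu, e1, e2, ← h1]
    push_cast
    ring

/-- The monomial function of `α`. -/
noncomputable def mon (α : Finset ℕ) : Finset ℕ → ℚ := fun β => if α ⊆ β then 1 else 0

/-- Integral span of the monomials of degree at most `i`. -/
noncomputable def LL (n i : ℕ) : Submodule ℤ (Finset ℕ → ℚ) :=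
  Submodule.span ℤ {x | ∃ α : Finset ℕ, α ⊆ Finset.Icc 1 n ∧ α.card ≤ i ∧ x = mon α}

lemma mon_mem {n i : ℕ} {α : Finset ℕ} (h : α ⊆ Finset.Icc 1 n) (h' : α.card ≤ i) :
    mon α ∈ LL n i := Submodule.subset_span ⟨α, h, h', rfl⟩

lemma LL_mono {n i : ℕ} : LL n i ≤ LL (n + 1) i := by
  refine Submodule.span_le.2 ?_
  rintro x ⟨α, h1, h2, rfl⟩
  exact mon_mem (h1.trans (Icc_sub n)) h2

lemma LL_insert {n i : ℕ} {g : Finset ℕ → ℚ} (hg : g ∈ LL n i) (β : Finset ℕ) :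
    g (insert (n + 1) β) = g β := by
  induction hg using Submodule.span_induction with
  | mem x hx =>
    obtain ⟨α, h1, _, rfl⟩ := hx
    simp only [mon, Finset.subset_insert_iff_of_notMem (notMem_of_sub h1)]
  | zero => rfl
  | add x y _ _ hx hy => simp [hx, hy]
  | smul a x _ hx => simp [hx]

lemma LL_mul {n i : ℕ} {g : Finset ℕ → ℚ} (hg : g ∈ LL n i) :
    ∃ g' ∈ LL (n + 1) (i + 1), ∀ β : Finset ℕ, g' β = if n + 1 ∈ β then 0 else g β := by
  induction hg using Submodule.span_induction with
  | mem x hx =>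
    obtain ⟨α, h1, h2, rfl⟩ := hx
    refine ⟨mon α - mon (insert (n + 1) α), sub_mem ?_ ?_, ?_⟩
    · exact mon_mem (h1.trans (Icc_sub n)) (by omega)
    · refine mon_mem (insert_sub h1) ?_
      rw [Finset.card_insert_of_notMem (notMem_of_sub h1)]
      omega
    · intro β
      by_cases hm : n + 1 ∈ β <;> simp [mon, Finset.insert_subset_iff, hm]
  | zero => exact ⟨0, zero_mem _, by simp⟩
  | add x y _ _ hx hy =>
    obtain ⟨a, ha, ha'⟩ := hx
    obtain ⟨b, hb, hb'⟩ := hy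
    refine ⟨a + b, add_mem ha hb, fun β => ?_⟩
    by_cases hm : n + 1 ∈ β <;> simp [ha', hb', hm]
  | smul c x _ hx =>
    obtain ⟨a, ha, ha'⟩ := hx
    refine ⟨c • a, Submodule.smul_mem _ _ ha, fun β => ?_⟩
    by_cases hm : n + 1 ∈ β <;> simp [ha', hm]

lemma LL_int {n i : ℕ} {g : Finset ℕ → ℚ} (hg : g ∈ LL n i) (β : Finset ℕ) :
    ∃ m : ℤ, g β = m := by
  induction hg using Submodule.span_induction with
  | mem x hx =>
    obtain ⟨α, h1, _, rfl⟩ := hx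
    by_cases hm : α ⊆ β
    · exact ⟨1, by simp [mon, hm]⟩
    · exact ⟨0, by simp [mon, hm]⟩
  | zero => exact ⟨0, by simp⟩
  | add x y _ _ hx hy =>
    obtain ⟨a, ha⟩ := hx
    obtain ⟨b, hb⟩ := hy
    exact ⟨a + b, by simp [ha, hb]⟩
  | smul c x _ hx =>
    obtain ⟨a, ha⟩ := hx
    exact ⟨c * a, by simp [ha]⟩

lemma key (n : ℕ) : ∀ i j, i ≤ j → 2 * j + i ≤ n →
    ∃ S ⊆ stdSets n j, S.card = (stdSets n i).card ∧
      ∀ c : Finset ℕ → ℤ, ∃ g ∈ LL n i, ∀ β ∈ S, g β = c β := by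
  have diag : ∀ n j, ∃ S ⊆ stdSets n j, S.card = (stdSets n j).card ∧
      ∀ c : Finset ℕ → ℤ, ∃ g ∈ LL n j, ∀ β ∈ S, g β = c β := by
    intro n j
    refine ⟨stdSets n j, subset_rfl, rfl, fun c => ?_⟩
    refine ⟨∑ α ∈ stdSets n j, c α • mon α, ?_, ?_⟩
    · refine sum_mem fun α hα => Submodule.smul_mem _ _ ?_
      exact mon_mem (mem_stdSets.1 hα).1 (mem_stdSets.1 hα).2.2.le
    · intro β hβ
      rw [Finset.sum_apply, Finset.sum_eq_single β]
      · simp [mon]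
      · intro α hα hne
        have : ¬ α ⊆ β := by
          intro hs
          apply hne
          apply Finset.eq_of_subset_of_card_le hs
          rw [(mem_stdSets.1 hα).2.2, (mem_stdSets.1 hβ).2.2]
        simp [mon, this]
      · exact fun hh => absurd hβ hh
  induction n with
  | zero =>
    intro i j hij h
    obtain rfl : j = 0 := by omega
    obtain rfl : i = 0 := by omega
    exact diag 0 0
  | succ n ih =>
    intro i j hij h
    rcases hij.eq_or_lt with rfl | hlt
    · exact diag _ _
    obtain ⟨j, rfl⟩ : ∃ j', j = j' + 1 := ⟨j - 1, by omega⟩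
    obtain ⟨S1, hS1, hc1, H1⟩ := ih i j (by omega) (by omega)
    have hS1' : ∀ β ∈ S1, β ⊆ Finset.Icc 1 n := fun β hβ => (mem_stdSets.1 (hS1 hβ)).1
    cases i with
    | zero =>
      refine ⟨S1.image (fun β => insert (n + 1) β), ?_, ?_, ?_⟩
      · intro β hβ
        obtain ⟨b, hb, rfl⟩ := Finset.mem_image.1 hβ
        exact insert_mem_stdSets (by omega) (hS1 hb)
      · rw [Finset.card_image_of_injOn (insert_injOn n S1 hS1'), hc1, card_stdSets_zero,
          card_stdSets_zero]
      · intro c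
        obtain ⟨g, hg, hg'⟩ := H1 (fun β => c (insert (n + 1) β))
        refine ⟨g, LL_mono hg, ?_⟩
        intro β hβ
        obtain ⟨b, hb, rfl⟩ := Finset.mem_image.1 hβ
        rw [LL_insert hg, hg' b hb]
    | succ i =>
      obtain ⟨S0, hS0, hc0, H0⟩ := ih i (j + 1) (by omega) (by omega)
      have hS0' : ∀ β ∈ S0, β ⊆ Finset.Icc 1 n := fun β hβ => (mem_stdSets.1 (hS0 hβ)).1
      refine ⟨S0 ∪ S1.image (fun β => insert (n + 1) β), ?_, ?_, ?_⟩
      · intro β hβ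
        rcases Finset.mem_union.1 hβ with hβ | hβ
        · exact stdSets_mono (hS0 hβ)
        · obtain ⟨b, hb, rfl⟩ := Finset.mem_image.1 hβ
          exact insert_mem_stdSets (by omega) (hS1 hb)
      · rw [card_union_insert n S0 S1 hS0' hS1', hc0, hc1, card_stdSets_succ (by omega), add_comm]
      · intro c
        obtain ⟨g, hg, hg'⟩ := H1 (fun β => c (insert (n + 1) β))
        choose m hm using fun β => LL_int hg β
        obtain ⟨f, hf, hf'⟩ := H0 (fun β => c β - m β)
        obtain ⟨f', hff, hff'⟩ := LL_mul hf
        refine ⟨g + f', add_mem (LL_mono hg) hff, ?_⟩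
        intro β hβ
        rcases Finset.mem_union.1 hβ with hβ | hβ
        · have := notMem_of_sub (hS0' β hβ)
          rw [Pi.add_apply, hff', if_neg this, hf' β hβ, hm β]
          push_cast
          ring
        · obtain ⟨b, hb, rfl⟩ := Finset.mem_image.1 hβ
          rw [Pi.add_apply, hff', if_pos (Finset.mem_insert_self _ _), LL_insert hg, hg' b hb,
            add_zero]

/-- Restriction of the monomial function to the standard `j`-sets. -/
noncomputable def monR (n j : ℕ) (α : Finset ℕ) : ↥(stdSets n j) → ℚ :=
  fun β => if α ⊆ (β : Finset ℕ) then 1 else 0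

lemma monR_zero {n j : ℕ} {α : Finset ℕ} (hα : ¬ IsStandard α) : monR n j α = 0 := by
  funext β
  have : ¬ α ⊆ (β : Finset ℕ) := fun hs =>
    hα (isStandard_subset _ _ hs (mem_stdSets.1 β.2).2.1)
  simp [monR, this]

lemma upper (n i j : ℕ) (hij : i ≤ j) (k : ℕ) : ∀ α : Finset ℕ, α ⊆ Finset.Icc 1 n →
    α.card + k = i →
    monR n j α ∈ Submodule.span ℚ
      (((stdSets n i).image (monR n j) : Finset _) : Set (↥(stdSets n j) → ℚ)) := by
  induction k with
  | zero =>
    intro α h1 h2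
    by_cases hs : IsStandard α
    · apply Submodule.subset_span
      rw [Finset.mem_coe]
      exact Finset.mem_image_of_mem _ (mem_stdSets.2 ⟨h1, hs, by omega⟩)
    · rw [monR_zero hs]
      exact zero_mem _
  | succ k ih =>
    intro α h1 h2
    have hpos : ((j - α.card : ℕ) : ℚ) ≠ 0 := by
      rw [Nat.cast_ne_zero]
      omega
    have e : monR n j α =
        ((j - α.card : ℕ) : ℚ)⁻¹ • ∑ b ∈ Finset.Icc 1 n \ α, monR n j (insert b α) := by
      rw [eq_inv_smul_iff₀ hpos]
      funext β
      obtain ⟨hb1, _, hb3⟩ := mem_stdSets.1 β.2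
      rw [Finset.sum_apply, Pi.smul_apply]
      simp only [monR, Finset.insert_subset_iff]
      by_cases hs : α ⊆ (β : Finset ℕ)
      · have e1 : (Finset.Icc 1 n \ α).filter (fun b => b ∈ (β : Finset ℕ)) =
            (β : Finset ℕ) \ α := by
          ext x
          simp only [Finset.mem_filter, Finset.mem_sdiff]
          exact ⟨fun hx => ⟨hx.2, hx.1.2⟩, fun hx => ⟨⟨hb1 hx.1, hx.2⟩, hx.1⟩⟩
        simp only [hs, and_true, if_true]
        rw [Finset.sum_boole, e1, Finset.card_sdiff_of_subset hs, hb3]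
        simp
      · simp [hs]
    rw [e]
    refine Submodule.smul_mem _ _ (sum_mem fun b hb => ?_)
    rw [Finset.mem_sdiff] at hb
    refine ih _ (Finset.insert_subset hb.1 h1) ?_
    rw [Finset.card_insert_of_notMem hb.2]
    omega

/-- `R` is the collection of all rows of the matrices `W_{s,j}` for `0 ≤ s ≤ i`,
regarded as vectors indexed by the standard `j`-subsets.  Then (a) every integer
vector in the ℚ-span of `R` lies in the ℤ-span of `R`, and (b) the ℚ-span of `R`
has dimension `μ_i(n)`. -/
theorem statement6 (n i j : ℕ) (hij : i ≤ j) (h : 2 * j + i ≤ n)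
    (R : Set (↥(stdSets n j) → ℚ))
    (hR : R = {x | ∃ s, s ≤ i ∧ ∃ α ∈ stdSets n s,
      x = fun β : ↥(stdSets n j) =>
        (if α ⊆ (β : Finset ℕ) then 1 else 0 : ℚ)}) :
    (∀ x ∈ Submodule.span ℚ R, (∀ β, ∃ m : ℤ, x β = (m : ℚ)) →
        x ∈ Submodule.span ℤ R) ∧
    ((Module.finrank ℚ (Submodule.span ℚ R) : ℤ) = mu n i) := by
  have hR' : R = {x | ∃ s, s ≤ i ∧ ∃ α ∈ stdSets n s, x = monR n j α} := hR
  clear hR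
  obtain ⟨S, hS, hcard, H⟩ := key n i j hij h
  -- upper bound
  have hle : Module.finrank ℚ (Submodule.span ℚ R) ≤ (stdSets n i).card := by
    have h1 : Submodule.span ℚ R ≤ Submodule.span ℚ
        (((stdSets n i).image (monR n j) : Finset _) : Set (↥(stdSets n j) → ℚ)) := by
      rw [Submodule.span_le, hR']
      rintro x ⟨s, hs, α, hα, rfl⟩
      obtain ⟨ha, _, hb⟩ := mem_stdSets.1 hα
      exact upper n i j hij (i - s) α ha (by omega)
    exact (Submodule.finrank_mono h1).trans
      ((finrank_span_finset_le_card _).trans Finset.card_image_le)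
  -- integral lifting
  have lift : ∀ c : Finset ℕ → ℤ, ∃ y ∈ Submodule.span ℤ R,
      ∀ β (hβ : β ∈ S), y ⟨β, hS hβ⟩ = c β := by
    intro c
    obtain ⟨g, hg, hg'⟩ := H c
    refine ⟨fun β => g β, ?_, fun β hβ => hg' β hβ⟩
    clear hg'
    induction hg using Submodule.span_induction with
    | mem x hx =>
      obtain ⟨α, h1, h2, rfl⟩ := hx
      change monR n j α ∈ _
      by_cases hs : IsStandard α
      · apply Submodule.subset_span
        rw [hR']
        exact ⟨α.card, h2, α, mem_stdSets.2 ⟨h1, hs, rfl⟩, rfl⟩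
      · rw [monR_zero hs]
        exact zero_mem _
    | zero => exact zero_mem _
    | add x y _ _ hx hy => exact add_mem hx hy
    | smul a x _ hx => exact Submodule.smul_mem _ a hx
  have hZQ : ∀ y ∈ Submodule.span ℤ R, y ∈ Submodule.span ℚ R := fun y hy =>
    Submodule.span_le_restrictScalars ℤ ℚ R hy
  -- restriction map
  let ρ : (↥(stdSets n j) → ℚ) →ₗ[ℚ] (↥S → ℚ) :=
    LinearMap.funLeft ℚ ℚ (fun β : ↥S => (⟨β.1, hS β.2⟩ : ↥(stdSets n j)))
  let φ : Submodule.span ℚ R →ₗ[ℚ] (↥S → ℚ) := ρ.comp (Submodule.span ℚ R).subtype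
  have hsurj : Function.Surjective φ := by
    rw [← LinearMap.range_eq_top, eq_top_iff, ← (Pi.basisFun ℚ ↥S).span_eq, Submodule.span_le]
    rintro _ ⟨b, rfl⟩
    obtain ⟨y, hy, hy'⟩ := lift (fun β => if β = b.1 then 1 else 0)
    refine ⟨⟨y, hZQ y hy⟩, ?_⟩
    funext β
    change y ⟨β.1, hS β.2⟩ = _
    rw [hy' β.1 β.2, Pi.basisFun_apply, Pi.single_apply]
    by_cases hb : β = b
    · simp [hb]
    · simp [hb, Subtype.coe_ne_coe.2 hb]
  have hfS : Module.finrank ℚ (↥S → ℚ) = (stdSets n i).card := by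
    rw [Module.finrank_fintype_fun_eq_card, Fintype.card_coe, hcard]
  have hge := LinearMap.finrank_le_finrank_of_surjective hsurj
  have heq : Module.finrank ℚ (Submodule.span ℚ R) = (stdSets n i).card := by omega
  have hinj : Function.Injective φ :=
    (LinearMap.injective_iff_surjective_of_finrank_eq_finrank (by rw [heq, hfS])).2 hsurj
  refine ⟨?_, ?_⟩
  · intro x hx hint
    choose m hm using hint
    obtain ⟨y, hy, hy'⟩ := lift (fun β => if hβ : β ∈ stdSets n j then m ⟨β, hβ⟩ else 0)
    have : (⟨x, hx⟩ : Submodule.span ℚ R) = ⟨y, hZQ y hy⟩ := by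
      apply hinj
      funext β
      change x ⟨β.1, hS β.2⟩ = y ⟨β.1, hS β.2⟩
      rw [hy' β.1 β.2, hm, dif_pos (hS β.2)]
    have hxy : x = y := congrArg Subtype.val this
    rw [hxy]
    exact hy
  · rw [heq]
    exact card_stdSets n i (by omega)
end

section
/- Let 0 ≤ ℓ ≤ k be integers, n ≥ 3k − 1, and λ ∈ ℤ. Let L = A_{n,k,k,ℓ} − λI, a square integer matrix indexed by the k-element subsets of {1,…,n}. For 0 ≤ s ≤ k let M_s be the (k−s+1) × (k−s+1) integer matrix with rows and columns indexed by integers s ≤ i, j ≤ k and entries M_s(i,j) = −λδ_{i,j} + C(j−s, i−s) · f_i(j; n, k, k, ℓ). Then there is an isomorphism of abelian groups S(L) ≅ ⊕_{s=0}^{k} S(M_s)^{m_s}, where m_s = C(n,s) − 2C(n,s−1) + C(n,s−2). -/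
open scoped Classical

/-- The `k`-element subsets of `{1,…,n}`. -/
def ksubsets (n k : ℕ) : Finset (Finset ℕ) :=
  (Finset.Icc 1 n).powerset.filter fun A => A.card = k

/-- The subset intersection matrix `A_{n,kr,kc,ℓ}`. -/
noncomputable def interMat (n kr kc ℓ : ℕ) :
    Matrix ↥(ksubsets n kr) ↥(ksubsets n kc) ℤ :=
  Matrix.of fun A B => if ((A : Finset ℕ) ∩ (B : Finset ℕ)).card = ℓ then 1 else 0

/-- `f_i(j; n, kr, kc, ℓ)`. -/
noncomputable def f (n kr kc ℓ i j : ℕ) : ℤ :=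
  ∑ v ∈ Finset.range (i + 1),
    (-1 : ℤ) ^ (i + v) * (i.choose v) *
      (C ((kr : ℤ) - v) ((ℓ : ℤ) - v) * C ((n : ℤ) - kr - j + v) ((kc : ℤ) - ℓ - j + v))

/-- The Smith group of an integer matrix: the quotient of the free abelian group of
integer vectors indexed by the columns by the subgroup generated by the rows. -/
abbrev SmithGroup {ρ γ : Type*} (M : Matrix ρ γ ℤ) : Type _ :=
  (γ → ℤ) ⧸ Submodule.span ℤ (Set.range fun r : ρ => M r)

/-- The matrix `M_s` of Definition 4.1, with rows and columns indexed by
`s ≤ i, j ≤ k` (here `i = s + t`, `j = s + u`):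
`M_s(i,j) = −λ δ_{i,j} + C(j−s,i−s)·f_i(j)`. -/
noncomputable def Ms (n k ℓ : ℕ) (lam : ℤ) (s : ℕ) :
    Matrix (Fin (k - s + 1)) (Fin (k - s + 1)) ℤ :=
  Matrix.of fun t u =>
    (if t = u then -lam else 0) +
      ((u : ℕ).choose (t : ℕ) : ℤ) * f n k k ℓ (s + t) (s + u)

/-- `m_s = C(n,s) − 2C(n,s−1) + C(n,s−2)`. -/
noncomputable def msMult (n s : ℕ) : ℤ :=
  C n s - 2 * C n ((s : ℤ) - 1) + C n ((s : ℤ) - 2)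


/-- Inclusion matrix of `S` against `B` is square and surjective on integer vectors. -/
def Uni (S B : Finset (Finset ℕ)) : Prop :=
  S.card = B.card ∧ ∀ h : Finset ℕ → ℤ, ∃ x : Finset ℕ → ℤ,
    ∀ b ∈ B, (∑ T ∈ S, if T ⊆ b then x T else 0) = h b

/-- shifted standardness -/
def St (c : ℕ) (T : Finset ℕ) : Prop :=
  ∀ t ∈ T, 2 * (T.filter (fun x => x ≤ t)).card + c ≤ t

theorem inj_insert (v : ℕ) (S : Finset (Finset ℕ)) (hS : ∀ T ∈ S, v ∉ T) :
    Set.InjOn (fun T : Finset ℕ => insert v T) S := by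
  intro a ha b hb hab
  have := congrArg (fun T => Finset.erase T v) hab
  simpa [Finset.erase_insert (hS a ha), Finset.erase_insert (hS b hb)] using this

theorem disj_insert (v : ℕ) (S0 S1 : Finset (Finset ℕ)) (hS : ∀ T ∈ S0, v ∉ T) :
    Disjoint S0 (S1.image (fun T => insert v T)) := by
  rw [Finset.disjoint_left]
  intro a ha hb
  obtain ⟨T, _, rfl⟩ := Finset.mem_image.1 hb
  exact hS _ ha (Finset.mem_insert_self _ _)

theorem Uni_step (v : ℕ) (S0 S1 B0 B1 : Finset (Finset ℕ))
    (hS0 : ∀ T ∈ S0, v ∉ T) (hS1 : ∀ T ∈ S1, v ∉ T)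
    (hB0 : ∀ T ∈ B0, v ∉ T) (hB1 : ∀ T ∈ B1, v ∉ T)
    (h0 : Uni S0 B0) (h1 : Uni S1 B1) :
    Uni (S0 ∪ S1.image (fun T => insert v T)) (B0 ∪ B1.image (fun T => insert v T)) := by
  constructor
  · rw [Finset.card_union_of_disjoint (disj_insert v S0 S1 hS0),
      Finset.card_union_of_disjoint (disj_insert v B0 B1 hB0),
      Finset.card_image_of_injOn (inj_insert v S1 hS1),
      Finset.card_image_of_injOn (inj_insert v B1 hB1), h0.1, h1.1]
  · intro h
    obtain ⟨x0, hx0⟩ := h0.2 h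
    obtain ⟨x1, hx1⟩ := h1.2 (fun b => h (insert v b) - ∑ T ∈ S0, if T ⊆ b then x0 T else 0)
    refine ⟨fun T => if v ∈ T then x1 (T.erase v) else x0 T, ?_⟩
    have key : ∀ b, (∑ T ∈ S0 ∪ S1.image (fun T => insert v T),
        if T ⊆ b then (if v ∈ T then x1 (T.erase v) else x0 T) else 0) =
        (∑ T ∈ S0, if T ⊆ b then x0 T else 0) +
        ∑ T ∈ S1, if insert v T ⊆ b then x1 T else 0 := by
      intro b
      rw [Finset.sum_union (disj_insert v S0 S1 hS0), Finset.sum_image (inj_insert v S1 hS1)]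
      congr 1
      · apply Finset.sum_congr rfl
        intro T hT
        simp [hS0 T hT]
      · apply Finset.sum_congr rfl
        intro T hT
        simp [Finset.erase_insert (hS1 T hT)]
    intro b hb
    rw [key]
    rcases Finset.mem_union.1 hb with hb | hb
    · rw [hx0 b hb, Finset.sum_eq_zero, add_zero]
      intro T hT
      rw [if_neg]
      intro hh
      exact hB0 b hb (hh (Finset.mem_insert_self _ _))
    · obtain ⟨b', hb', rfl⟩ := Finset.mem_image.1 hb
      have e1 : (∑ T ∈ S0, if T ⊆ insert v b' then x0 T else 0) =
          ∑ T ∈ S0, if T ⊆ b' then x0 T else 0 := by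
        apply Finset.sum_congr rfl
        intro T hT
        simp only [Finset.subset_insert_iff_of_notMem (hS0 T hT)]
      have e2 : (∑ T ∈ S1, if insert v T ⊆ insert v b' then x1 T else 0) =
          ∑ T ∈ S1, if T ⊆ b' then x1 T else 0 := by
        apply Finset.sum_congr rfl
        intro T hT
        simp only [Finset.insert_subset_insert_iff (hS1 T hT)]
      rw [e1, e2, hx1 b' hb']
      ring

theorem Uni_compl (V : Finset ℕ) (S B : Finset (Finset ℕ))
    (hS : ∀ T ∈ S, T ⊆ V) (hd : ∀ T ∈ S, ∀ R, R ⊆ T → R ∈ S) (hB : ∀ b ∈ B, b ⊆ V)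
    (h : Uni S B) : Uni S (B.image (fun b => V \ b)) := by
  constructor
  · rw [Finset.card_image_of_injOn, h.1]
    intro a ha b hb hab
    have := congrArg (fun T => V \ T) hab
    simpa [Finset.sdiff_sdiff_eq_self (hB a ha), Finset.sdiff_sdiff_eq_self (hB b hb)] using this
  · intro g
    obtain ⟨y, hy⟩ := h.2 (fun b => g (V \ b))
    refine ⟨fun T => ∑ R ∈ S, if T ⊆ R then (-1) ^ T.card * y R else 0, ?_⟩
    intro b' hb'
    obtain ⟨b, hb, rfl⟩ := Finset.mem_image.1 hb'
    rw [← hy b hb]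
    have e : ∀ T ∈ S, (if T ⊆ V \ b then ∑ R ∈ S, (if T ⊆ R then (-1) ^ T.card * y R else 0) else 0)
        = ∑ R ∈ S, if T ∈ (R \ b).powerset then (-1) ^ T.card * y R else 0 := by
      intro T hT
      split_ifs with hTV
      · apply Finset.sum_congr rfl
        intro R hR
        have : T ∈ (R \ b).powerset ↔ T ⊆ R := by
          rw [Finset.mem_powerset, Finset.subset_sdiff]
          rw [Finset.subset_sdiff] at hTV
          tauto
        simp only [this]
      · symm
        apply Finset.sum_eq_zero
        intro R hR
        rw [if_neg]
        intro hh
        apply hTV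
        rw [Finset.mem_powerset] at hh
        exact hh.trans (Finset.sdiff_subset_sdiff (hS R hR) (le_refl _))
    rw [Finset.sum_congr rfl e, Finset.sum_comm]
    apply Finset.sum_congr rfl
    intro R hR
    rw [← Finset.sum_filter]
    have : S.filter (fun T => T ∈ (R \ b).powerset) = (R \ b).powerset := by
      ext T
      simp only [Finset.mem_filter, Finset.mem_powerset, and_iff_right_iff_imp]
      intro hT
      exact hd R hR T (hT.trans Finset.sdiff_subset)
    rw [this, ← Finset.sum_mul, Finset.sum_powerset_neg_one_pow_card]
    by_cases hRb : R ⊆ b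
    · simp [hRb]
    · simp [hRb]

theorem St_mono (c : ℕ) (T R : Finset ℕ) (h : St c T) (hR : R ⊆ T) : St c R := by
  intro t ht
  have h1 := h t (hR ht)
  have := Finset.card_le_card (Finset.filter_subset_filter (fun x => x ≤ t) hR)
  omega

/-- all c-standard subsets of size at most k -/
noncomputable def SF (c n k : ℕ) : Finset (Finset ℕ) :=
  (Finset.Ioc c n).powerset.filter (fun T => T.card ≤ k ∧ St c T)

theorem Uni_zero (S B : Finset (Finset ℕ)) (hS : S = {∅}) (hB : B = {∅}) : Uni S B := by
  subst hS hB
  refine ⟨rfl, fun h => ⟨h, ?_⟩⟩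
  simp

theorem mem_SF (c n k : ℕ) (T : Finset ℕ) :
    T ∈ SF c n k ↔ T ⊆ Finset.Ioc c n ∧ T.card ≤ k ∧ St c T := by
  simp [SF]

theorem St_empty (c : ℕ) : St c ∅ := by
  intro t ht
  simp at ht

theorem St_insert_max (c n : ℕ) (T : Finset ℕ) (hT : ∀ t ∈ T, t < n) :
    St c (insert n T) ↔ St c T ∧ 2 * (T.card + 1) + c ≤ n := by
  have hn : n ∉ T := fun h => lt_irrefl _ (hT n h)
  have e1 : (insert n T).filter (fun x => x ≤ n) = insert n T := by
    rw [Finset.filter_eq_self]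
    intro x hx
    rcases Finset.mem_insert.1 hx with rfl | hx
    · exact le_refl _
    · exact (hT x hx).le
  have e2 : ∀ t ∈ T, (insert n T).filter (fun x => x ≤ t) = T.filter (fun x => x ≤ t) := by
    intro t ht
    rw [Finset.filter_insert, if_neg]
    have := hT t ht
    omega
  constructor
  · intro h
    refine ⟨St_mono _ _ _ h (Finset.subset_insert _ _), ?_⟩
    have := h n (Finset.mem_insert_self _ _)
    rwa [e1, Finset.card_insert_of_notMem hn] at this
  · rintro ⟨h1, h2⟩ t ht
    rcases Finset.mem_insert.1 ht with rfl | ht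
    · rwa [e1, Finset.card_insert_of_notMem hn]
    · rw [e2 t ht]
      exact h1 t ht

theorem St_insert_min (c a : ℕ) (T : Finset ℕ) (hT : ∀ t ∈ T, a < t) :
    St c (insert a T) ↔ St (c + 2) T ∧ 2 + c ≤ a := by
  have hn : a ∉ T := fun h => lt_irrefl _ (hT a h)
  have e1 : (insert a T).filter (fun x => x ≤ a) = {a} := by
    ext x
    simp only [Finset.mem_filter, Finset.mem_insert, Finset.mem_singleton]
    constructor
    · rintro ⟨rfl | h, h2⟩
      · rfl
      · have := hT x h
        omega
    · rintro rfl
      simp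
  have e2 : ∀ t ∈ T, ((insert a T).filter (fun x => x ≤ t)).card =
      (T.filter (fun x => x ≤ t)).card + 1 := by
    intro t ht
    have := hT t ht
    rw [Finset.filter_insert, if_pos this.le, Finset.card_insert_of_notMem]
    simp [hn]
  constructor
  · intro h
    constructor
    · intro t ht
      have := h t (Finset.mem_insert_of_mem ht)
      rw [e2 t ht] at this
      omega
    · have := h a (Finset.mem_insert_self _ _)
      rwa [e1, Finset.card_singleton] at this
  · rintro ⟨h1, h2⟩ t ht
    rcases Finset.mem_insert.1 ht with rfl | ht
    · rw [e1, Finset.card_singleton]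
      omega
    · rw [e2 t ht]
      have := h1 t ht
      omega

theorem ext_insert (v : ℕ) (S S0 S1 : Finset (Finset ℕ))
    (h0 : ∀ T, v ∉ T → (T ∈ S ↔ T ∈ S0)) (h1 : ∀ T, v ∉ T → (insert v T ∈ S ↔ T ∈ S1))
    (hS0 : ∀ T ∈ S0, v ∉ T) (hS1 : ∀ T ∈ S1, v ∉ T) :
    S = S0 ∪ S1.image (fun T => insert v T) := by
  ext T
  rw [Finset.mem_union, Finset.mem_image]
  by_cases hv : v ∈ T
  · have e : insert v (T.erase v) = T := Finset.insert_erase hv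
    have := h1 (T.erase v) (Finset.notMem_erase _ _)
    rw [e] at this
    rw [this]
    constructor
    · intro h
      exact Or.inr ⟨_, h, e⟩
    · rintro (h | ⟨R, hR, rfl⟩)
      · exact absurd hv (hS0 T h)
      · rwa [Finset.erase_insert (hS1 R hR)]
  · rw [h0 T hv]
    constructor
    · exact Or.inl
    · rintro (h | ⟨R, hR, rfl⟩)
      · exact h
      · exact absurd (Finset.mem_insert_self _ _) hv

theorem lt_of_mem (c n : ℕ) (T : Finset ℕ) (hT : T ⊆ Finset.Ioc c n) : ∀ t ∈ T, t < n + 1 := by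
  intro t ht
  have := Finset.mem_Ioc.1 (hT ht)
  omega

theorem sub_Ioc (c n : ℕ) (T : Finset ℕ) (h : n + 1 ∉ T) :
    T ⊆ Finset.Ioc c (n + 1) ↔ T ⊆ Finset.Ioc c n := by
  constructor
  · intro hT t ht
    have := Finset.mem_Ioc.1 (hT ht)
    have h2 : t ≠ n + 1 := fun e => h (e ▸ ht)
    rw [Finset.mem_Ioc]
    omega
  · intro hT t ht
    have := Finset.mem_Ioc.1 (hT ht)
    rw [Finset.mem_Ioc]
    omega

theorem notMem_of_sub_Ioc (c n : ℕ) (T : Finset ℕ) (hT : T ⊆ Finset.Ioc c n) : n + 1 ∉ T := by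
  intro h
  have := Finset.mem_Ioc.1 (hT h)
  omega

theorem card_le_of_St (c n : ℕ) (T : Finset ℕ) (hT : T ⊆ Finset.Ioc c n) (h : St c T)
    (hne : T ≠ ∅) : 2 * T.card + c ≤ n := by
  have hne' : T.Nonempty := Finset.nonempty_iff_ne_empty.2 hne
  have h1 := h _ (T.max'_mem hne')
  have e : T.filter (fun x => x ≤ T.max' hne') = T := by
    rw [Finset.filter_eq_self]
    intro x hx
    exact T.le_max' x hx
  rw [e] at h1
  have := Finset.mem_Ioc.1 (hT (T.max'_mem hne'))
  omega

theorem Uni_full (c : ℕ) : ∀ n k : ℕ, 2 * k + c ≤ n + 1 →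
    Uni (SF c n k) ((Finset.Ioc c n).powersetCard k) := by
  intro n
  induction n with
  | zero =>
    intro k hk
    have : k = 0 := by omega
    subst this
    apply Uni_zero
    · ext T
      rw [mem_SF]
      simp only [Finset.mem_singleton]
      constructor
      · rintro ⟨_, h, _⟩
        simpa using h
      · rintro rfl
        exact ⟨by simp, by simp, St_empty _⟩
    · simp
  | succ n ih =>
    have step : ∀ k, (k = 0 ∨ 2 * k + c ≤ n + 1) → Uni (SF c (n + 1) k) ((Finset.Ioc c (n + 1)).powersetCard k) := by
      intro k hb
      rcases k with _ | k
      · apply Uni_zero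
        · ext T
          rw [mem_SF]
          simp only [Finset.mem_singleton]
          constructor
          · rintro ⟨_, h, _⟩
            simpa using h
          · rintro rfl
            exact ⟨by simp, by simp, St_empty _⟩
        · simp
      · have h0 := ih (k + 1) (by omega)
        have h1 := ih k (by omega)
        have eS : SF c (n + 1) (k + 1) =
            SF c n (k + 1) ∪ (SF c n k).image (fun T => insert (n + 1) T) := by
          apply ext_insert
          · intro T hT
            rw [mem_SF, mem_SF, sub_Ioc _ _ _ hT]
          · intro T hT
            rw [mem_SF, mem_SF, Finset.insert_subset_iff, sub_Ioc _ _ _ hT,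
              Finset.card_insert_of_notMem hT]
            constructor
            · rintro ⟨⟨_, h2⟩, h3, h4⟩
              rw [St_insert_max _ _ _ (lt_of_mem c n T h2)] at h4
              exact ⟨h2, by omega, h4.1⟩
            · rintro ⟨h2, h3, h4⟩
              rw [St_insert_max _ _ _ (lt_of_mem c n T h2)]
              exact ⟨⟨Finset.mem_Ioc.2 (by omega), h2⟩, by omega, h4, by omega⟩
          · intro T hT
            exact notMem_of_sub_Ioc _ _ _ ((mem_SF _ _ _ _).1 hT).1
          · intro T hT
            exact notMem_of_sub_Ioc _ _ _ ((mem_SF _ _ _ _).1 hT).1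
        have eB : (Finset.Ioc c (n + 1)).powersetCard (k + 1) =
            (Finset.Ioc c n).powersetCard (k + 1) ∪
            ((Finset.Ioc c n).powersetCard k).image (fun T => insert (n + 1) T) := by
          apply ext_insert
          · intro T hT
            rw [Finset.mem_powersetCard, Finset.mem_powersetCard, sub_Ioc _ _ _ hT]
          · intro T hT
            rw [Finset.mem_powersetCard, Finset.mem_powersetCard, Finset.insert_subset_iff,
              sub_Ioc _ _ _ hT, Finset.card_insert_of_notMem hT, Finset.mem_Ioc]
            constructor
            · rintro ⟨⟨_, h2⟩, h3⟩
              exact ⟨h2, by omega⟩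
            · rintro ⟨h2, h3⟩
              exact ⟨⟨by omega, h2⟩, by omega⟩
          · intro T hT
            exact notMem_of_sub_Ioc _ _ _ (Finset.mem_powersetCard.1 hT).1
          · intro T hT
            exact notMem_of_sub_Ioc _ _ _ (Finset.mem_powersetCard.1 hT).1
        rw [eS, eB]
        apply Uni_step _ _ _ _ _ _ _ _ _ h0 h1
        · intro T hT
          exact notMem_of_sub_Ioc _ _ _ ((mem_SF _ _ _ _).1 hT).1
        · intro T hT
          exact notMem_of_sub_Ioc _ _ _ ((mem_SF _ _ _ _).1 hT).1
        · intro T hT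
          exact notMem_of_sub_Ioc _ _ _ (Finset.mem_powersetCard.1 hT).1
        · intro T hT
          exact notMem_of_sub_Ioc _ _ _ (Finset.mem_powersetCard.1 hT).1
    intro k hk
    by_cases hb : k = 0 ∨ 2 * k + c ≤ n + 1
    · exact step k hb
    · -- complement case: n + 1 - c = 2 k - 1
      obtain ⟨k, rfl⟩ : ∃ k', k = k' + 1 := ⟨k - 1, by omega⟩
      have h := Uni_compl (Finset.Ioc c (n + 1)) _ _ ?_ ?_ ?_ (step k (Or.inr (by omega)))
      · have e1 : SF c (n + 1) (k + 1) = SF c (n + 1) k := by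
          ext T
          rw [mem_SF, mem_SF]
          constructor
          · rintro ⟨h1, h2, h3⟩
            refine ⟨h1, ?_, h3⟩
            by_cases hT : T = ∅
            · simp [hT]
            · have := card_le_of_St _ _ _ h1 h3 hT
              omega
          · rintro ⟨h1, h2, h3⟩
            exact ⟨h1, by omega, h3⟩
        have hc : (Finset.Ioc c (n + 1)).card = 2 * k + 1 := by
          rw [Nat.card_Ioc]
          omega
        have e2 : (Finset.Ioc c (n + 1)).powersetCard (k + 1) =
            ((Finset.Ioc c (n + 1)).powersetCard k).image (fun b => Finset.Ioc c (n + 1) \ b) := by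
          ext T
          rw [Finset.mem_image, Finset.mem_powersetCard]
          constructor
          · rintro ⟨h1, h2⟩
            refine ⟨Finset.Ioc c (n + 1) \ T, ?_, Finset.sdiff_sdiff_eq_self h1⟩
            rw [Finset.mem_powersetCard, Finset.card_sdiff_of_subset h1]
            exact ⟨Finset.sdiff_subset, by omega⟩
          · rintro ⟨b, hb, rfl⟩
            rw [Finset.mem_powersetCard] at hb
            rw [Finset.card_sdiff_of_subset hb.1]
            exact ⟨Finset.sdiff_subset, by omega⟩
        rw [e1, e2]
        exact h
      · intro T hT
        exact ((mem_SF _ _ _ _).1 hT).1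
      · intro T hT R hR
        rw [mem_SF] at hT ⊢
        exact ⟨hR.trans hT.1, (Finset.card_le_card hR).trans hT.2.1, St_mono _ _ _ hT.2.2 hR⟩
      · intro b hb
        exact (Finset.mem_powersetCard.1 hb).1

/-- `c`-standard `j`-subsets of `[a,n]`. -/
noncomputable def DF (n a c j : ℕ) : Finset (Finset ℕ) :=
  (Finset.Icc a n).powerset.filter (fun T => T.card = j ∧ St c T)

theorem mem_DF (n a c j : ℕ) (T : Finset ℕ) :
    T ∈ DF n a c j ↔ T ⊆ Finset.Icc a n ∧ T.card = j ∧ St c T := by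
  simp [DF]

theorem sub_Icc (a n : ℕ) (T : Finset ℕ) (h : a ∉ T) :
    T ⊆ Finset.Icc a n ↔ T ⊆ Finset.Icc (a + 1) n := by
  constructor
  · intro hT t ht
    have := Finset.mem_Icc.1 (hT ht)
    have h2 : t ≠ a := fun e => h (e ▸ ht)
    rw [Finset.mem_Icc]
    omega
  · intro hT t ht
    have := Finset.mem_Icc.1 (hT ht)
    rw [Finset.mem_Icc]
    omega

theorem notMem_of_sub_Icc (a n : ℕ) (T : Finset ℕ) (hT : T ⊆ Finset.Icc (a + 1) n) : a ∉ T := by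
  intro h
  have := Finset.mem_Icc.1 (hT h)
  omega

theorem DF_zero (n a c : ℕ) : DF n a c 0 = {∅} := by
  ext T
  rw [mem_DF]
  simp only [Finset.mem_singleton, Finset.card_eq_zero]
  constructor
  · rintro ⟨_, h, _⟩
    exact h
  · rintro rfl
    exact ⟨by simp, rfl, St_empty _⟩

theorem Uni_std (n : ℕ) : ∀ k d a c : ℕ, 3 * k + c ≤ n + 1 → a + d = k + 1 + c →
    ∃ S : Finset (Finset ℕ), (∀ T ∈ S, T ⊆ Finset.Icc a n ∧ T.card ≤ k) ∧
      ∀ j ≤ k, Uni (S.filter (fun T => T.card ≤ j)) (DF n a c j) := by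
  intro k
  induction k with
  | zero =>
    intro d a c _ _
    refine ⟨{∅}, by simp, ?_⟩
    intro j hj
    obtain rfl : j = 0 := by omega
    apply Uni_zero
    · ext T
      simp only [Finset.mem_filter, Finset.mem_singleton]
      constructor
      · exact fun h => h.1
      · rintro rfl
        simp
    · exact DF_zero _ _ _
  | succ k ihk =>
    intro d
    induction d with
    | zero =>
      intro a c hn ha
      have hI : Finset.Icc a n = Finset.Ioc (k + 1 + c) n := by
        ext x
        rw [Finset.mem_Icc, Finset.mem_Ioc]
        omega
      refine ⟨SF (k + 1 + c) n (k + 1), ?_, ?_⟩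
      · intro T hT
        rw [mem_SF] at hT
        rw [hI]
        exact ⟨hT.1, hT.2.1⟩
      · intro j hj
        have h := Uni_full (k + 1 + c) n j (by omega)
        have e1 : (SF (k + 1 + c) n (k + 1)).filter (fun T => T.card ≤ j) =
            SF (k + 1 + c) n j := by
          ext T
          rw [Finset.mem_filter, mem_SF, mem_SF]
          constructor
          · rintro ⟨⟨h1, h2, h3⟩, h4⟩
            exact ⟨h1, h4, h3⟩
          · rintro ⟨h1, h2, h3⟩
            exact ⟨⟨h1, by omega, h3⟩, h2⟩
        have e2 : DF n a c j = (Finset.Ioc (k + 1 + c) n).powersetCard j := by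
          ext T
          rw [mem_DF, Finset.mem_powersetCard, hI]
          constructor
          · rintro ⟨h1, h2, h3⟩
            exact ⟨h1, h2⟩
          · rintro ⟨h1, h2⟩
            refine ⟨h1, h2, ?_⟩
            intro t ht
            have ht' := Finset.mem_Ioc.1 (h1 ht)
            have hc1 : (T.filter (fun x => x ≤ t)).card ≤ T.card :=
              Finset.card_le_card (Finset.filter_subset _ _)
            have hc2 : (T.filter (fun x => x ≤ t)).card ≤ (Finset.Ioc (k + 1 + c) t).card := by
              apply Finset.card_le_card
              intro x hx
              rw [Finset.mem_filter] at hx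
              have := Finset.mem_Ioc.1 (h1 hx.1)
              rw [Finset.mem_Ioc]
              omega
            rw [Nat.card_Ioc] at hc2
            omega
        rw [e1, e2]
        exact h
    | succ d ihd =>
      intro a c hn ha
      obtain ⟨S0, hS0, hU0⟩ := ihd (a + 1) c hn (by omega)
      have hS0' : ∀ T ∈ S0, a ∉ T := fun T hT => notMem_of_sub_Icc _ _ _ (hS0 T hT).1
      have hB0 : ∀ c j, ∀ T ∈ DF n (a + 1) c j, a ∉ T :=
        fun c j T hT => notMem_of_sub_Icc _ _ _ ((mem_DF _ _ _ _ _).1 hT).1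
      by_cases hac : 2 + c ≤ a
      · obtain ⟨S1, hS1, hU1⟩ := ihk (d + 1) (a + 1) (c + 2) (by omega) (by omega)
        have hS1' : ∀ T ∈ S1, a ∉ T := fun T hT => notMem_of_sub_Icc _ _ _ (hS1 T hT).1
        refine ⟨S0 ∪ S1.image (fun T => insert a T), ?_, ?_⟩
        · intro T hT
          rcases Finset.mem_union.1 hT with hT | hT
          · have := hS0 T hT
            exact ⟨(sub_Icc _ _ _ (hS0' T hT)).2 this.1, this.2⟩
          · obtain ⟨R, hR, rfl⟩ := Finset.mem_image.1 hT
            have := hS1 R hR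
            rw [Finset.insert_subset_iff, Finset.card_insert_of_notMem (hS1' R hR)]
            exact ⟨⟨Finset.mem_Icc.2 (by omega), (sub_Icc _ _ _ (hS1' R hR)).2 this.1⟩, by omega⟩
        · intro j hj
          rcases j with _ | j
          · have h := hU0 0 (by omega)
            rw [DF_zero] at h ⊢
            have e : (S0 ∪ S1.image (fun T => insert a T)).filter (fun T => T.card ≤ 0) =
                S0.filter (fun T => T.card ≤ 0) := by
              ext T
              simp only [Finset.mem_filter, Finset.mem_union, Finset.mem_image]
              constructor
              · rintro ⟨h1 | ⟨R, hR, rfl⟩, h2⟩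
                · exact ⟨h1, h2⟩
                · rw [Finset.card_insert_of_notMem (hS1' R hR)] at h2
                  omega
              · rintro ⟨h1, h2⟩
                exact ⟨Or.inl h1, h2⟩
            rw [e]
            exact h
          · have e1 : (S0 ∪ S1.image (fun T => insert a T)).filter (fun T => T.card ≤ j + 1) =
                S0.filter (fun T => T.card ≤ j + 1) ∪
                (S1.filter (fun T => T.card ≤ j)).image (fun T => insert a T) := by
              ext T
              simp only [Finset.mem_filter, Finset.mem_union, Finset.mem_image]
              constructor
              · rintro ⟨h1 | ⟨R, hR, rfl⟩, h2⟩
                · exact Or.inl ⟨h1, h2⟩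
                · rw [Finset.card_insert_of_notMem (hS1' R hR)] at h2
                  exact Or.inr ⟨R, ⟨hR, by omega⟩, rfl⟩
              · rintro (⟨h1, h2⟩ | ⟨R, ⟨hR, h2⟩, rfl⟩)
                · exact ⟨Or.inl h1, h2⟩
                · rw [Finset.card_insert_of_notMem (hS1' R hR)]
                  exact ⟨Or.inr ⟨R, hR, rfl⟩, by omega⟩
            have e2 : DF n a c (j + 1) = DF n (a + 1) c (j + 1) ∪
                (DF n (a + 1) (c + 2) j).image (fun T => insert a T) := by
              apply ext_insert _ _ _ _ _ _ (hB0 _ _) (hB0 _ _)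
              · intro T hT
                rw [mem_DF, mem_DF, sub_Icc _ _ _ hT]
              · intro T hT
                rw [mem_DF, mem_DF, Finset.insert_subset_iff, sub_Icc _ _ _ hT,
                  Finset.card_insert_of_notMem hT]
                have key : T ⊆ Finset.Icc (a + 1) n → ∀ t ∈ T, a < t := by
                  intro h t ht
                  have := Finset.mem_Icc.1 (h ht)
                  omega
                constructor
                · rintro ⟨⟨_, h1⟩, h2, h3⟩
                  rw [St_insert_min _ _ _ (key h1)] at h3
                  exact ⟨h1, by omega, h3.1⟩
                · rintro ⟨h1, h2, h3⟩
                  rw [St_insert_min _ _ _ (key h1)]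
                  exact ⟨⟨Finset.mem_Icc.2 (by omega), h1⟩, by omega, h3, hac⟩
            rw [e1, e2]
            apply Uni_step _ _ _ _ _ _ _ (hB0 _ _) (hB0 _ _) (hU0 _ hj) (hU1 _ (by omega))
            · intro T hT
              exact hS0' T (Finset.mem_filter.1 hT).1
            · intro T hT
              exact hS1' T (Finset.mem_filter.1 hT).1
      · refine ⟨S0, ?_, ?_⟩
        · intro T hT
          have := hS0 T hT
          exact ⟨(sub_Icc _ _ _ (hS0' T hT)).2 this.1, this.2⟩
        · intro j hj
          have e : DF n a c j = DF n (a + 1) c j := by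
            ext T
            rw [mem_DF, mem_DF]
            by_cases hT : a ∈ T
            · constructor
              · rintro ⟨h1, h2, h3⟩
                exfalso
                have h4 := h3 a hT
                have h5 : 0 < (T.filter (fun x => x ≤ a)).card :=
                  Finset.card_pos.2 ⟨a, by simp [hT]⟩
                omega
              · rintro ⟨h1, h2, h3⟩
                exact absurd hT (notMem_of_sub_Icc _ _ _ h1)
            · rw [sub_Icc _ _ _ hT]
          rw [e]
          exact hU0 j hj

theorem Uni_inv (S B : Finset (Finset ℕ)) (h : Uni S B) :
    ∃ N : Matrix ↥S ↥B ℤ,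
      (Matrix.of fun (b : ↥B) (T : ↥S) => if (T : Finset ℕ) ⊆ b then (1 : ℤ) else 0) * N = 1 ∧
      N * (Matrix.of fun (b : ↥B) (T : ↥S) => if (T : Finset ℕ) ⊆ b then (1 : ℤ) else 0) = 1 := by
  choose x hx using fun b0 : Finset ℕ => h.2 (fun b => if b = b0 then 1 else 0)
  have h1 : (Matrix.of fun (b : ↥B) (T : ↥S) => if (T : Finset ℕ) ⊆ b then (1 : ℤ) else 0) *
      (Matrix.of fun (T : ↥S) (b : ↥B) => x b T) = 1 := by
    ext b b0
    rw [Matrix.mul_apply, Matrix.one_apply]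
    have := hx b0 b b.2
    rw [← Finset.sum_coe_sort] at this
    simp only [Matrix.of_apply, ite_mul, one_mul, zero_mul]
    rw [this]
    simp only [Subtype.ext_iff]
  refine ⟨_, h1, ?_⟩
  refine (Matrix.mul_eq_one_comm_of_card_eq _ _ _ ?_).1 h1
  simp [h.1]

theorem Uni_inj (S B : Finset (Finset ℕ)) (h : Uni S B) (x : Finset ℕ → ℤ)
    (hx : ∀ b ∈ B, (∑ T ∈ S, if T ⊆ b then x T else 0) = 0) : ∀ T ∈ S, x T = 0 := by
  obtain ⟨N, _, h2⟩ := Uni_inv S B h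
  have h3 : Matrix.mulVec (Matrix.of fun (b : ↥B) (T : ↥S) =>
      if (T : Finset ℕ) ⊆ b then (1 : ℤ) else 0) (fun T : ↥S => x T) = 0 := by
    ext b
    have := hx b b.2
    rw [← Finset.sum_coe_sort] at this
    simpa [Matrix.mulVec, dotProduct] using this
  have h4 := congrArg (fun v => Matrix.mulVec N v) h3
  simp only [Matrix.mulVec_mulVec, h2, Matrix.one_mulVec, Matrix.mulVec_zero] at h4
  intro T hT
  exact congrFun h4 ⟨T, hT⟩

theorem interval_sum (R T : Finset ℕ) (hRT : R ⊆ T) (F : ℕ → ℤ) :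
    (∑ U ∈ T.powerset, if R ⊆ U then F U.card else 0) =
      ∑ t ∈ Finset.range (T.card - R.card + 1), ((T.card - R.card).choose t : ℤ) * F (R.card + t) := by
  have e : T.powerset.filter (fun U => R ⊆ U) = (T \ R).powerset.image (fun W => R ∪ W) := by
    ext U
    simp only [Finset.mem_filter, Finset.mem_powerset, Finset.mem_image]
    constructor
    · rintro ⟨h1, h2⟩
      exact ⟨U \ R, Finset.sdiff_subset_sdiff h1 (le_refl _), Finset.union_sdiff_of_subset h2⟩
    · rintro ⟨W, hW, rfl⟩
      exact ⟨Finset.union_subset hRT (hW.trans Finset.sdiff_subset), Finset.subset_union_left⟩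
  rw [← Finset.sum_filter, e, Finset.sum_image]
  · have : ∀ W ∈ (T \ R).powerset, F (R ∪ W).card = F (R.card + W.card) := by
      intro W hW
      rw [Finset.card_union_of_disjoint]
      rw [Finset.mem_powerset] at hW
      exact (Finset.disjoint_sdiff).mono_right hW
    rw [Finset.sum_congr rfl this,
      Finset.sum_powerset_apply_card (fun m => F (R.card + m)), Finset.card_sdiff_of_subset hRT]
    simp
  · intro a ha b hb hab
    simp only [Finset.coe_powerset, Set.mem_preimage, Set.mem_powerset_iff, Finset.coe_subset] at ha hb
    have := congrArg (fun X => X \ R) hab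
    simp only [Finset.union_sdiff_left] at this
    rwa [Finset.sdiff_eq_self_of_disjoint, Finset.sdiff_eq_self_of_disjoint] at this
    · exact ((Finset.disjoint_sdiff).mono_right hb).symm
    · exact ((Finset.disjoint_sdiff).mono_right ha).symm

theorem binom_inv (g : ℕ → ℤ) (V : ℕ) :
    ∑ i ∈ Finset.range (V + 1), (V.choose i : ℤ) *
      (∑ v ∈ Finset.range (i + 1), (-1 : ℤ) ^ (i + v) * (i.choose v) * g v) = g V := by
  have h := shift_eq_sum_fwdDiff_iter 1 g V 0
  simp only [smul_eq_mul, mul_one, zero_add] at h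
  rw [h]
  apply Finset.sum_congr rfl
  intro i hi
  rw [fwdDiff_iter_eq_sum_shift, nsmul_eq_mul]
  congr 1
  apply Finset.sum_congr rfl
  intro v hv
  have hv' : v ≤ i := by
    have := Finset.mem_range.1 hv
    omega
  have : (-1 : ℤ) ^ (i + v) = (-1) ^ (i - v) := by
    have : i + v = (i - v) + 2 * v := by omega
    rw [this, pow_add, pow_mul]
    simp
  rw [this]
  simp

theorem count_inter (n k ℓ : ℕ) (T b' : Finset ℕ) (hT : T ⊆ Finset.Icc 1 n)
    (hb' : b' ∈ ksubsets n k) :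
    (((ksubsets n k).filter (fun b => T ⊆ b ∧ (b' ∩ b).card = ℓ)).card : ℤ) =
      C ((k : ℤ) - (T ∩ b').card) ((ℓ : ℤ) - (T ∩ b').card) *
      C ((n : ℤ) - k - T.card + (T ∩ b').card) ((k : ℤ) - ℓ - T.card + (T ∩ b').card) := by
  simp only [ksubsets, Finset.mem_filter, Finset.mem_powerset] at hb'
  obtain ⟨hb1, hb2⟩ := hb'
  set V := Finset.Icc 1 n with hV
  have hVc : V.card = n := by simp [hV]
  set P := b' \ T with hP
  set Q := V \ (b' ∪ T) with hQ
  set v := (T ∩ b').card with hv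
  have hPc : P.card + v = k := by
    rw [hP, hv, Finset.inter_comm, Finset.card_sdiff_add_card_inter, hb2]
  have hU : (b' ∪ T).card + v = k + T.card := by
    rw [hv, Finset.inter_comm, Finset.card_union_add_card_inter, hb2]
  have hQc : Q.card + (b' ∪ T).card = n := by
    rw [hQ, Finset.card_sdiff_add_card_eq_card (Finset.union_subset hb1 hT), hVc]
  have hPT : Disjoint P T := Finset.sdiff_disjoint
  have hQU : Disjoint Q (b' ∪ T) := Finset.sdiff_disjoint
  -- structure of b
  have key : ∀ b, T ⊆ b → b ⊆ V → b = T ∪ ((b ∩ P) ∪ (b ∩ Q)) := by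
    intro b h1 h2
    ext x
    have h1x := @h1 x
    have h2x := @h2 x
    simp only [hP, hQ, Finset.mem_union, Finset.mem_inter, Finset.mem_sdiff]
    tauto
  have cardu : ∀ p q, p ⊆ P → q ⊆ Q → (T ∪ (p ∪ q)).card = T.card + (p.card + q.card) ∧
      (b' ∩ (T ∪ (p ∪ q))).card = v + p.card ∧ (T ∪ (p ∪ q)) ∩ P = p ∧ (T ∪ (p ∪ q)) ∩ Q = q := by
    intro p q hp hq
    have d1 : Disjoint p q := by
      rw [Finset.disjoint_left]
      intro x hx hx'
      have := hp hx
      have h' := hq hx'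
      simp only [hP, hQ, Finset.mem_union, Finset.mem_sdiff] at this h'
      tauto
    have d2 : Disjoint T (p ∪ q) := by
      rw [Finset.disjoint_left]
      intro x hx hx'
      rcases Finset.mem_union.1 hx' with h | h
      · have := hp h
        simp only [hP, Finset.mem_sdiff] at this
        tauto
      · have := hq h
        simp only [hQ, Finset.mem_union, Finset.mem_sdiff] at this
        tauto
    refine ⟨?_, ?_, ?_, ?_⟩
    · rw [Finset.card_union_of_disjoint d2, Finset.card_union_of_disjoint d1]
    · have : b' ∩ (T ∪ (p ∪ q)) = (T ∩ b') ∪ p := by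
        ext x
        have hpx := @hp x
        have hqx := @hq x
        simp only [hP, hQ, Finset.mem_union, Finset.mem_inter, Finset.mem_sdiff] at *
        tauto
      rw [this, Finset.card_union_of_disjoint]
      exact (d2.mono_left Finset.inter_subset_left).mono_right Finset.subset_union_left
    · ext x
      have hpx := @hp x
      have hqx := @hq x
      simp only [hP, hQ, Finset.mem_union, Finset.mem_inter, Finset.mem_sdiff] at *
      tauto
    · ext x
      have hpx := @hp x
      have hqx := @hq x
      simp only [hP, hQ, Finset.mem_union, Finset.mem_inter, Finset.mem_sdiff] at *
      tauto
  have memb : ∀ b, b ∈ (ksubsets n k).filter (fun b => T ⊆ b ∧ (b' ∩ b).card = ℓ) ↔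
      (b ⊆ V ∧ b.card = k) ∧ T ⊆ b ∧ (b' ∩ b).card = ℓ := by
    intro b
    simp [ksubsets, hV]
  by_cases hc : v ≤ ℓ ∧ T.card + ℓ ≤ k + v
  · obtain ⟨hc1, hc2⟩ := hc
    have hcard : ((ksubsets n k).filter (fun b => T ⊆ b ∧ (b' ∩ b).card = ℓ)).card =
        (P.powersetCard (ℓ - v) ×ˢ Q.powersetCard (k + v - T.card - ℓ)).card := by
      apply Finset.card_nbij' (fun b => (b ∩ P, b ∩ Q)) (fun pq => T ∪ (pq.1 ∪ pq.2))
      · intro b hb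
        obtain ⟨⟨h1, h2⟩, h3, h4⟩ := (memb b).1 hb
        have e := key b h3 h1
        have c := cardu (b ∩ P) (b ∩ Q) Finset.inter_subset_right Finset.inter_subset_right
        rw [← e] at c
        simp only [Finset.coe_product, Set.mem_prod, Finset.mem_coe, Finset.mem_powersetCard]
        refine ⟨⟨Finset.inter_subset_right, ?_⟩, ⟨Finset.inter_subset_right, ?_⟩⟩
        · omega
        · omega
      · rintro ⟨p, q⟩ hpq
        simp only [Finset.coe_product, Set.mem_prod, Finset.mem_coe, Finset.mem_powersetCard] at hpq
        obtain ⟨⟨hp, hp2⟩, hq, hq2⟩ := hpq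
        have c := cardu p q hp hq
        refine (memb _).2 ⟨⟨?_, ?_⟩, Finset.subset_union_left, ?_⟩
        · exact Finset.union_subset hT (Finset.union_subset
            (hp.trans (Finset.sdiff_subset.trans hb1)) (hq.trans Finset.sdiff_subset))
        · simp only
          omega
        · simp only
          omega
      · intro b hb
        obtain ⟨⟨h1, h2⟩, h3, h4⟩ := (memb b).1 hb
        exact (key b h3 h1).symm
      · rintro ⟨p, q⟩ hpq
        simp only [Finset.coe_product, Set.mem_prod, Finset.mem_coe, Finset.mem_powersetCard] at hpq
        obtain ⟨⟨hp, hp2⟩, hq, hq2⟩ := hpq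
        have c := cardu p q hp hq
        simp only [c.2.2.1, c.2.2.2]
    rw [hcard, Finset.card_product, Finset.card_powersetCard, Finset.card_powersetCard]
    have e1 : C ((k : ℤ) - v) ((ℓ : ℤ) - v) = (P.card.choose (ℓ - v) : ℤ) := by
      unfold C
      have t1 : ((k : ℤ) - v).toNat = P.card := by omega
      have t2 : ((ℓ : ℤ) - v).toNat = ℓ - v := by omega
      rw [t1, t2]
      split_ifs with hh
      · rfl
      · rw [Nat.choose_eq_zero_of_lt]
        · rfl
        · omega
    have e2 : C ((n : ℤ) - k - T.card + v) ((k : ℤ) - ℓ - T.card + v) =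
        (Q.card.choose (k + v - T.card - ℓ) : ℤ) := by
      unfold C
      have t1 : ((n : ℤ) - k - T.card + v).toNat = Q.card := by omega
      have t2 : ((k : ℤ) - ℓ - T.card + v).toNat = k + v - T.card - ℓ := by omega
      rw [t1, t2]
      split_ifs with hh
      · rfl
      · rw [Nat.choose_eq_zero_of_lt]
        · rfl
        · omega
    rw [e1, e2]
    push_cast
    rfl
  · have hz : (ksubsets n k).filter (fun b => T ⊆ b ∧ (b' ∩ b).card = ℓ) = ∅ := by
      rw [Finset.eq_empty_iff_forall_notMem]
      intro b hb
      obtain ⟨⟨h1, h2⟩, h3, h4⟩ := (memb b).1 hb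
      have e := key b h3 h1
      have c := cardu (b ∩ P) (b ∩ Q) Finset.inter_subset_right Finset.inter_subset_right
      rw [← e] at c
      omega
    rw [hz]
    have : C ((k : ℤ) - v) ((ℓ : ℤ) - v) = 0 ∨
        C ((n : ℤ) - k - T.card + v) ((k : ℤ) - ℓ - T.card + v) = 0 := by
      unfold C
      by_cases hvl : v ≤ ℓ
      · right
        rw [if_neg]
        omega
      · left
        rw [if_neg]
        omega
    rcases this with h | h <;> simp [h]

theorem count_f (n k ℓ : ℕ) (T b' : Finset ℕ) (hT : T ⊆ Finset.Icc 1 n)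
    (hb' : b' ∈ ksubsets n k) :
    (((ksubsets n k).filter (fun b => T ⊆ b ∧ (b' ∩ b).card = ℓ)).card : ℤ) =
      ∑ U ∈ T.powerset, if U ⊆ b' then f n k k ℓ U.card T.card else 0 := by
  rw [count_inter n k ℓ T b' hT hb', ← Finset.sum_filter]
  have e : T.powerset.filter (fun U => U ⊆ b') = (T ∩ b').powerset := by
    ext U
    rw [Finset.mem_filter, Finset.mem_powerset, Finset.mem_powerset, Finset.subset_inter_iff]
  rw [e, Finset.sum_powerset_apply_card (fun m => f n k k ℓ m T.card)]
  simp only [nsmul_eq_mul, f]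
  exact (binom_inv (fun v => C ((k : ℤ) - v) ((ℓ : ℤ) - v) *
    C ((n : ℤ) - k - T.card + v) ((k : ℤ) - ℓ - T.card + v)) _).symm

theorem C_nat (n s : ℕ) : C n s = n.choose s := by
  unfold C
  split_ifs with h
  · simp
  · rw [Nat.choose_eq_zero_of_lt]
    · rfl
    · omega

theorem C_neg (n : ℕ) (y : ℤ) (hy : y < 0) : C n y = 0 := by
  unfold C
  rw [if_neg]
  omega

theorem card_SF (n j : ℕ) (h : 2 * j ≤ n + 1) : (SF 0 n j).card = n.choose j := by
  rw [(Uni_full 0 n j (by omega)).1, Finset.card_powersetCard]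
  simp

theorem Ioc_eq_Icc (n : ℕ) : Finset.Ioc 0 n = Finset.Icc 1 n := by
  ext x
  rw [Finset.mem_Ioc, Finset.mem_Icc]
  omega

theorem card_SF_succ (n j : ℕ) : (SF 0 n (j + 1)).card = (SF 0 n j).card + (DF n 1 0 (j + 1)).card := by
  rw [← Finset.card_union_of_disjoint]
  · congr 1
    ext T
    rw [Finset.mem_union, mem_SF, mem_SF, mem_DF, Ioc_eq_Icc, Nat.le_succ_iff]
    simp only [Nat.succ_eq_add_one]
    tauto
  · rw [Finset.disjoint_left]
    intro T h1 h2
    rw [mem_SF] at h1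
    rw [mem_DF] at h2
    omega

theorem card_mult (n k : ℕ) (hn : 3 * k ≤ n + 1) (S : Finset (Finset ℕ))
    (hU : ∀ j ≤ k, Uni (S.filter (fun T => T.card ≤ j)) (DF n 1 0 j)) (s : ℕ) (hs : s ≤ k) :
    (msMult n s).toNat = (S.filter (fun T => T.card = s)).card := by
  have hS : ∀ j, (S.filter (fun T => T.card ≤ j + 1)).card =
      (S.filter (fun T => T.card ≤ j)).card + (S.filter (fun T => T.card = j + 1)).card := by
    intro j
    rw [← Finset.card_union_of_disjoint]
    · congr 1
      ext T
      simp only [Finset.mem_union, Finset.mem_filter, Nat.le_succ_iff, Nat.succ_eq_add_one]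
      tauto
    · rw [Finset.disjoint_left]
      intro T h1 h2
      rw [Finset.mem_filter] at h1 h2
      omega
  have hd : ∀ j ≤ k, (S.filter (fun T => T.card ≤ j)).card = (DF n 1 0 j).card :=
    fun j hj => (hU j hj).1
  rcases s with _ | _ | s
  · have h0 := hd 0 (by omega)
    rw [DF_zero, Finset.card_singleton] at h0
    have e : S.filter (fun T => T.card ≤ 0) = S.filter (fun T => T.card = 0) := by
      simp
    rw [e] at h0
    rw [h0]
    unfold msMult
    rw [C_neg _ (((0 : ℕ) : ℤ) - 1) (by norm_num), C_neg _ (((0 : ℕ) : ℤ) - 2) (by norm_num), C_nat]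
    simp
  · have h0 := hd 0 (by omega)
    have h1 := hd 1 (by omega)
    have h2 := hS 0
    have h3 := card_SF_succ n 0
    rw [card_SF n 0 (by omega), card_SF n (0 + 1) (by omega)] at h3
    rw [DF_zero, Finset.card_singleton] at h0
    simp only [zero_add, Nat.choose_zero_right, Nat.choose_one_right] at h2 h3 ⊢
    unfold msMult
    rw [C_neg _ ((1 : ℕ) - 2) (by norm_num), C_nat]
    have e : C (n : ℤ) (((1 : ℕ) : ℤ) - 1) = 1 := by
      have := C_nat n 0
      simpa using this
    rw [e]
    simp only [Nat.choose_one_right]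
    omega
  · have h0 := hd (s + 1) (by omega)
    have h1 := hd (s + 1 + 1) (by omega)
    have h2 := hS (s + 1)
    have h3 := card_SF_succ n (s + 1)
    have h4 := card_SF_succ n s
    rw [card_SF n (s + 1) (by omega), card_SF n (s + 1 + 1) (by omega)] at h3
    rw [card_SF n (s + 1) (by omega), card_SF n s (by omega)] at h4
    unfold msMult
    have e1 : (((s + 1 + 1 : ℕ) : ℤ) - 1) = ((s + 1 : ℕ) : ℤ) := by
      push_cast
      ring
    have e2 : (((s + 1 + 1 : ℕ) : ℤ) - 2) = ((s : ℕ) : ℤ) := by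
      push_cast
      ring
    rw [e1, e2, C_nat, C_nat, C_nat]
    omega

theorem exists_index (n k : ℕ) (hn : 3 * k ≤ n + 1) (S : Finset (Finset ℕ))
    (hSk : ∀ T ∈ S, T.card ≤ k)
    (hU : ∀ j ≤ k, Uni (S.filter (fun T => T.card ≤ j)) (DF n 1 0 j)) :
    ∃ E : ((s : Fin (k + 1)) × Fin (msMult n s).toNat) ≃ ↥S,
      ∀ p, ((E p : Finset ℕ)).card = p.1 := by
  let φ : ↥S → Fin (k + 1) := fun R => ⟨(R : Finset ℕ).card, Nat.lt_succ_of_le (hSk R R.2)⟩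
  have hc : ∀ s : Fin (k + 1), Fintype.card {R : ↥S // φ R = s} = (msMult n s).toNat := by
    intro s
    rw [card_mult n k hn S hU s (by omega), Fintype.card_subtype,
      ← Finset.card_map (Function.Embedding.subtype _)]
    congr 1
    ext T
    simp only [Finset.mem_map, Finset.mem_filter, Finset.mem_univ, true_and, φ, Fin.ext_iff]
    constructor
    · rintro ⟨R, hR, rfl⟩
      exact ⟨R.2, hR⟩
    · rintro ⟨h1, h2⟩
      exact ⟨⟨T, h1⟩, h2, rfl⟩
  let e : (s : Fin (k + 1)) → (Fin (msMult n s).toNat ≃ {R : ↥S // φ R = s}) :=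
    fun s => (Fintype.equivFinOfCardEq (hc s)).symm
  refine ⟨(Equiv.sigmaCongrRight e).trans (Equiv.sigmaFiberEquiv φ), ?_⟩
  rintro ⟨s, m⟩
  have := (e s m).2
  have h2 := congrArg Fin.val this
  exact h2

theorem ksubsets_eq (n k : ℕ) : ksubsets n k = (Finset.Ioc 0 n).powersetCard k := by
  ext T
  rw [Ioc_eq_Icc, Finset.mem_powersetCard, ksubsets, Finset.mem_filter, Finset.mem_powerset]

/-- `x ↦ (T ↦ ∑_{B ⊇ T} x_B)`. -/
noncomputable def Psi (n k : ℕ) : (↥(ksubsets n k) → ℤ) →ₗ[ℤ] (↥(SF 0 n k) → ℤ) where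
  toFun x T := ∑ B : ↥(ksubsets n k), if (T : Finset ℕ) ⊆ B then x B else 0
  map_add' x y := by
    ext T
    simp only [Pi.add_apply, ← Finset.sum_add_distrib]
    apply Finset.sum_congr rfl
    intro B _
    split_ifs <;> simp
  map_smul' r x := by
    ext T
    simp [Finset.mul_sum]

theorem Psi_bij (n k : ℕ) (hn : 2 * k ≤ n + 1) : Function.Bijective (Psi n k) := by
  have hU : Uni (SF 0 n k) (ksubsets n k) := by
    rw [ksubsets_eq]
    exact Uni_full 0 n k (by omega)
  obtain ⟨N, h1, h2⟩ := Uni_inv _ _ hU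
  set W : Matrix ↥(ksubsets n k) ↥(SF 0 n k) ℤ :=
    (Matrix.of fun b T => if (T : Finset ℕ) ⊆ b then (1 : ℤ) else 0) with hW
  have e : ∀ x, Psi n k x = Matrix.vecMul x W := by
    intro x
    ext T
    simp [Psi, Matrix.vecMul, dotProduct, hW]
  constructor
  · intro x y hxy
    rw [e, e] at hxy
    have := congrArg (fun z => Matrix.vecMul z N) hxy
    simpa [Matrix.vecMul_vecMul, h1] using this
  · intro y
    refine ⟨Matrix.vecMul y N, ?_⟩
    rw [e, Matrix.vecMul_vecMul, h2, Matrix.vecMul_one]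

/-- The transported operator. -/
noncomputable def Kop (n k ℓ : ℕ) (lam : ℤ) (g : ↥(SF 0 n k) → ℤ) : ↥(SF 0 n k) → ℤ :=
  fun T => (∑ U : ↥(SF 0 n k), if (U : Finset ℕ) ⊆ T then
    f n k k ℓ (U : Finset ℕ).card (T : Finset ℕ).card * g U else 0) - lam * g T

theorem sum_SF (n k : ℕ) (T : ↥(SF 0 n k)) (F : Finset ℕ → ℤ) :
    (∑ U : ↥(SF 0 n k), if (U : Finset ℕ) ⊆ T then F U else 0) =
      ∑ U ∈ (T : Finset ℕ).powerset, F U := by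
  rw [Finset.sum_coe_sort (SF 0 n k) (fun U => if U ⊆ (T : Finset ℕ) then F U else 0),
    ← Finset.sum_filter]
  congr 1
  ext U
  rw [Finset.mem_filter, Finset.mem_powerset, mem_SF]
  have hT := (mem_SF _ _ _ _).1 T.2
  constructor
  · exact fun h => h.2
  · intro h
    exact ⟨⟨h.trans hT.1, (Finset.card_le_card h).trans hT.2.1, St_mono _ _ _ hT.2.2 h⟩, h⟩

theorem Psi_L (n k ℓ : ℕ) (lam : ℤ) (x : ↥(ksubsets n k) → ℤ) :
    Psi n k (Matrix.vecMul x (interMat n k k ℓ - lam • (1 : Matrix ↥(ksubsets n k) ↥(ksubsets n k) ℤ)))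
      = Kop n k ℓ lam (Psi n k x) := by
  rw [Matrix.vecMul_sub, Matrix.vecMul_smul, Matrix.vecMul_one, map_sub, map_smul]
  ext T
  have hT := (mem_SF _ _ _ _).1 T.2
  simp only [Pi.sub_apply, Pi.smul_apply, smul_eq_mul, Kop]
  congr 1
  have e1 : Psi n k (Matrix.vecMul x (interMat n k k ℓ)) T =
      ∑ b' : ↥(ksubsets n k), x b' *
        (((ksubsets n k).filter (fun b => (T : Finset ℕ) ⊆ b ∧
          ((b' : Finset ℕ) ∩ b).card = ℓ)).card : ℤ) := by
    have e2 : ∀ b : ↥(ksubsets n k), (if (T : Finset ℕ) ⊆ b then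
        Matrix.vecMul x (interMat n k k ℓ) b else 0) =
        ∑ b' : ↥(ksubsets n k), x b' * (if (T : Finset ℕ) ⊆ b ∧
          ((b' : Finset ℕ) ∩ b).card = ℓ then 1 else 0) := by
      intro b
      split_ifs with h
      · simp [Matrix.vecMul, dotProduct, interMat, h]
      · simp [h]
    change (∑ b : ↥(ksubsets n k), if (T : Finset ℕ) ⊆ b then
        Matrix.vecMul x (interMat n k k ℓ) b else 0) = _
    rw [Finset.sum_congr rfl (fun b _ => e2 b), Finset.sum_comm]
    apply Finset.sum_congr rfl
    intro b' _
    rw [← Finset.mul_sum, Finset.card_filter]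
    push_cast
    rw [← Finset.sum_coe_sort (ksubsets n k)]
  rw [e1]
  have e3 : ∀ U : ↥(SF 0 n k), (if (U : Finset ℕ) ⊆ T then
      f n k k ℓ (U : Finset ℕ).card (T : Finset ℕ).card * Psi n k x U else 0) =
      ∑ b' : ↥(ksubsets n k), x b' * (if (U : Finset ℕ) ⊆ T then (if (U : Finset ℕ) ⊆ b' then
        f n k k ℓ (U : Finset ℕ).card (T : Finset ℕ).card else 0) else 0) := by
    intro U
    split_ifs with h
    · change _ * (∑ b' : ↥(ksubsets n k), if (U : Finset ℕ) ⊆ b' then x b' else 0) = _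
      rw [Finset.mul_sum]
      apply Finset.sum_congr rfl
      intro b' _
      split_ifs
      · ring
      · ring
    · simp
  rw [Finset.sum_congr rfl (fun U _ => e3 U), Finset.sum_comm]
  apply Finset.sum_congr rfl
  intro b' _
  rw [← Finset.mul_sum, sum_SF n k T (fun U => if U ⊆ (b' : Finset ℕ) then
    f n k k ℓ U.card (T : Finset ℕ).card else 0), count_f n k ℓ T b' _ b'.2]
  rw [← Ioc_eq_Icc]
  exact hT.1

theorem SF_card_le (n k : ℕ) (T : ↥(SF 0 n k)) : (T : Finset ℕ).card ≤ k :=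
  ((mem_SF _ _ _ _).1 T.2).2.1

/-- `h ↦ (T ↦ ∑_{R ∈ S, R ⊆ T} h(R,|T|))`. -/
noncomputable def Theta (n k : ℕ) (ι : Type) [Fintype ι] (σ : ι → Fin (k + 1))
    (E : ι → Finset ℕ) : ((p : ι) → Fin (k - σ p + 1) → ℤ) →ₗ[ℤ] (↥(SF 0 n k) → ℤ) where
  toFun h T := ∑ p, if E p ⊆ T then
    h p ⟨(T : Finset ℕ).card - σ p, by have := SF_card_le n k T; omega⟩ else 0
  map_add' x y := by
    ext T
    simp only [Pi.add_apply, ← Finset.sum_add_distrib]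
    apply Finset.sum_congr rfl
    intro B _
    split_ifs <;> simp
  map_smul' r x := by
    ext T
    simp [Finset.mul_sum]

theorem Theta_bij (n k : ℕ) (S : Finset (Finset ℕ)) (ι : Type) [Fintype ι] (σ : ι → Fin (k + 1))
    (E : ι ≃ ↥S) (hE : ∀ p, (E p : Finset ℕ).card = σ p)
    (hU : ∀ j ≤ k, Uni (S.filter (fun T => T.card ≤ j)) (DF n 1 0 j)) :
    Function.Bijective (Theta n k ι σ (fun p => (E p : Finset ℕ))) := by
  have red : ∀ (y : Finset ℕ → ℤ) (b : Finset ℕ),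
      (∑ R ∈ S.filter (fun R => R.card ≤ b.card), if R ⊆ b then y R else 0) =
      ∑ p : ι, if (E p : Finset ℕ) ⊆ b then y (E p) else 0 := by
    intro y b
    rw [Equiv.sum_comp E (fun R : ↥S => if (R : Finset ℕ) ⊆ b then y R else 0),
      Finset.sum_coe_sort S (fun R => if R ⊆ b then y R else 0), Finset.sum_filter]
    apply Finset.sum_congr rfl
    intro R _
    by_cases h : R ⊆ b
    · simp [h, Finset.card_le_card h]
    · simp [h]
  constructor
  · rw [injective_iff_map_eq_zero]
    intro h hh
    let y : (j : ℕ) → j ≤ k → Finset ℕ → ℤ := fun j hj R =>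
      if hR : R ∈ S then h (E.symm ⟨R, hR⟩) ⟨j - σ (E.symm ⟨R, hR⟩), by omega⟩ else 0
    have hyE : ∀ j hj p, y j hj (E p) = h p ⟨j - σ p, by omega⟩ := by
      intro j hj p
      have e : E.symm ⟨(E p : Finset ℕ), (E p).2⟩ = p := by simp
      simp only [y, (E p).2, dif_pos]
      rw! [e]
      rfl
    have hy : ∀ j hj, ∀ R ∈ S.filter (fun R => R.card ≤ j), y j hj R = 0 := by
      intro j hj
      apply Uni_inj _ _ (hU j hj)
      intro b hb
      rw [mem_DF] at hb
      obtain ⟨hb1, hb2, hb3⟩ := hb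
      subst hb2
      rw [red]
      have hb' : b ∈ SF 0 n k := by
        rw [mem_SF, Ioc_eq_Icc]
        exact ⟨hb1, hj, hb3⟩
      have := congrFun hh ⟨b, hb'⟩
      simp only [hyE]
      exact this
    ext p u
    have hj : (σ p : ℕ) + u ≤ k := by omega
    have h1 := hy (σ p + u) hj (E p) (by
      rw [Finset.mem_filter, hE]
      exact ⟨(E p).2, by omega⟩)
    rw [hyE (σ p + u) hj p] at h1
    simpa using h1
  · intro g
    let g' : Finset ℕ → ℤ := fun T => if hT : T ∈ SF 0 n k then g ⟨T, hT⟩ else 0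
    have hx : ∀ j, ∃ x : Finset ℕ → ℤ, j ≤ k → ∀ b ∈ DF n 1 0 j,
        (∑ R ∈ S.filter (fun R => R.card ≤ j), if R ⊆ b then x R else 0) = g' b := by
      intro j
      by_cases hj : j ≤ k
      · obtain ⟨x, hx⟩ := (hU j hj).2 g'
        exact ⟨x, fun _ => hx⟩
      · exact ⟨0, fun h => absurd h hj⟩
    choose x hx using hx
    refine ⟨fun p u => x (σ p + u) (E p), ?_⟩
    ext T
    have hT := (mem_SF _ _ _ _).1 T.2
    have h1 := hx (T : Finset ℕ).card hT.2.1 T (by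
      rw [mem_DF, ← Ioc_eq_Icc]
      exact ⟨hT.1, rfl, hT.2.2⟩)
    rw [red] at h1
    have hg : g' T = g T := by simp [g']
    rw [← hg, ← h1]
    apply Finset.sum_congr rfl
    intro p _
    by_cases h : (E p : Finset ℕ) ⊆ T
    · have h2 := Finset.card_le_card h
      rw [hE] at h2
      simp only [h, if_true]
      congr 1
      omega
    · simp [h]

theorem Theta_M (n k ℓ : ℕ) (lam : ℤ) (S : Finset (Finset ℕ)) (ι : Type) [Fintype ι]
    (σ : ι → Fin (k + 1))
    (E : ι ≃ ↥S) (hE : ∀ p, (E p : Finset ℕ).card = σ p) (h : (p : ι) → Fin (k - σ p + 1) → ℤ) :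
    Theta n k ι σ (fun p => (E p : Finset ℕ)) (fun p => Matrix.vecMul (h p) (Ms n k ℓ lam (σ p))) =
      Kop n k ℓ lam (Theta n k ι σ (fun p => (E p : Finset ℕ)) h) := by
  ext T
  have hT := (mem_SF _ _ _ _).1 T.2
  have hTh : ∀ (h : (p : ι) → Fin (k - σ p + 1) → ℤ) (U : ↥(SF 0 n k)),
      Theta n k ι σ (fun p => (E p : Finset ℕ)) h U = ∑ p, if (E p : Finset ℕ) ⊆ U then
        h p ⟨(U : Finset ℕ).card - σ p, by have := SF_card_le n k U; omega⟩ else 0 :=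
    fun _ _ => rfl
  let h' : ι → ℕ → ℤ := fun p t => if ht : t < k - σ p + 1 then h p ⟨t, ht⟩ else 0
  have hh' : ∀ p (t : Fin (k - σ p + 1)), h p t = h' p t := by
    intro p t
    simp only [h', t.2, dif_pos]
  have e3 : ∀ U : ↥(SF 0 n k), (if (U : Finset ℕ) ⊆ T then
      f n k k ℓ (U : Finset ℕ).card (T : Finset ℕ).card *
        Theta n k ι σ (fun p => (E p : Finset ℕ)) h U else 0) =
      ∑ p, (if (U : Finset ℕ) ⊆ T then (if (E p : Finset ℕ) ⊆ U then
        f n k k ℓ (U : Finset ℕ).card (T : Finset ℕ).card *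
          h' p ((U : Finset ℕ).card - σ p) else 0) else 0) := by
    intro U
    split_ifs with hU
    · rw [hTh, Finset.mul_sum]
      apply Finset.sum_congr rfl
      intro p _
      rw [hh']
      split_ifs <;> simp
    · simp
  rw [Kop, Finset.sum_congr rfl (fun U _ => e3 U), Finset.sum_comm, hTh, hTh, Finset.mul_sum,
    ← Finset.sum_sub_distrib]
  apply Finset.sum_congr rfl
  intro p _
  rw [sum_SF n k T (fun U => if (E p : Finset ℕ) ⊆ U then
        f n k k ℓ U.card (T : Finset ℕ).card * h' p (U.card - σ p) else 0)]
  by_cases hp : (E p : Finset ℕ) ⊆ T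
  · have hc := Finset.card_le_card hp
    rw [hE] at hc
    rw [interval_sum _ _ hp (fun m => f n k k ℓ m (T : Finset ℕ).card * h' p (m - σ p)), hE]
    simp only [hp, if_true]
    have hTk := hT.2.1
    obtain ⟨u, hu⟩ : ∃ u, u = (T : Finset ℕ).card - σ p := ⟨_, rfl⟩
    have e4 : (σ p : ℕ) + u = (T : Finset ℕ).card := by omega
    simp only [Matrix.vecMul, dotProduct, Ms, Matrix.of_apply, mul_add, Finset.sum_add_distrib]
    rw [add_comm, sub_eq_add_neg]
    congr 1
    · simp only [hh', ← hu, e4, Nat.add_sub_cancel_left]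
      rw [Fin.sum_univ_eq_sum_range (fun t => h' p t *
        ((u.choose t : ℤ) * f n k k ℓ (σ p + t) (T : Finset ℕ).card)) (k - σ p + 1)]
      symm
      rw [Finset.sum_subset (Finset.range_subset_range.2 (show u + 1 ≤ k - σ p + 1 by omega))]
      · apply Finset.sum_congr rfl
        intro t _
        ring
      · intro t _ ht
        rw [Nat.choose_eq_zero_of_lt]
        · simp
        · rw [Finset.mem_range] at ht
          omega
    · simp [mul_comm]
  · simp only [hp, if_false, mul_zero, sub_zero]
    symm
    apply Finset.sum_eq_zero
    intro U hU
    rw [if_neg]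
    intro hh
    exact hp (hh.trans (Finset.mem_powerset.1 hU))
/-- `S(A − λI) ≅ ⊕_{s=0}^{k} S(M_s)^{m_s}`. -/
theorem statement10 (n k ℓ : ℕ) (hlk : ℓ ≤ k) (hn : 3 * k ≤ n + 1) (lam : ℤ) :
    Nonempty (SmithGroup (interMat n k k ℓ - lam • (1 : Matrix ↥(ksubsets n k) ↥(ksubsets n k) ℤ)) ≃+
      ((s : Fin (k + 1)) → Fin (msMult n s).toNat → SmithGroup (Ms n k ℓ lam s))) := by
  obtain ⟨S, hS, hU⟩ := Uni_std n k k 1 0 (by omega) (by omega)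
  obtain ⟨E, hE⟩ := exists_index n k hn S (fun T hT => (hS T hT).2) hU
  let Pe := LinearEquiv.ofBijective _ (Psi_bij n k (by omega))
  let Te := LinearEquiv.ofBijective _
    (Theta_bij n k S ((s : Fin (k + 1)) × Fin (msMult n s).toNat) (fun p => p.1) E hE hU)
  let Φ := Pe.trans Te.symm
  have hΦ : ∀ x, Φ (Matrix.vecMul x (interMat n k k ℓ -
      lam • (1 : Matrix ↥(ksubsets n k) ↥(ksubsets n k) ℤ))) =
      fun p => Matrix.vecMul (Φ x p) (Ms n k ℓ lam p.1) := by
    intro x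
    apply Te.injective
    have e1 : ∀ z, Te (Φ z) = Psi n k z := by
      intro z
      simp only [Φ, LinearEquiv.trans_apply, LinearEquiv.apply_symm_apply]
      rfl
    rw [e1, Psi_L, ← e1 x]
    exact (Theta_M n k ℓ lam S _ (fun p => p.1) E hE (Φ x)).symm
  have hmap : Submodule.map (Φ : _ →ₗ[ℤ] _) (Submodule.span ℤ (Set.range fun r => (interMat n k k ℓ -
      lam • (1 : Matrix ↥(ksubsets n k) ↥(ksubsets n k) ℤ)) r)) =
      Submodule.pi Set.univ (fun p : (s : Fin (k + 1)) × Fin (msMult n s).toNat =>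
        Submodule.span ℤ (Set.range fun r => Ms n k ℓ lam p.1 r)) := by
    have r1 := range_vecMulLinear (interMat n k k ℓ -
      lam • (1 : Matrix ↥(ksubsets n k) ↥(ksubsets n k) ℤ))
    have r2 := fun s => range_vecMulLinear (Ms n k ℓ lam s)
    change Submodule.map (Φ : _ →ₗ[ℤ] _) (Submodule.span ℤ (Set.range (interMat n k k ℓ -
      lam • (1 : Matrix ↥(ksubsets n k) ↥(ksubsets n k) ℤ)).row)) =
      Submodule.pi Set.univ (fun p : (s : Fin (k + 1)) × Fin (msMult n s).toNat =>
        Submodule.span ℤ (Set.range (Ms n k ℓ lam p.1).row))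
    rw [← r1]
    simp only [← r2]
    ext y
    simp only [Submodule.mem_map, LinearMap.mem_range, Submodule.mem_pi, Set.mem_univ, true_imp_iff]
    constructor
    · rintro ⟨_, ⟨x, rfl⟩, rfl⟩ p
      refine ⟨Φ x p, ?_⟩
      have := congrFun (hΦ x) p
      exact this.symm
    · intro hy
      choose z hz using hy
      refine ⟨_, ⟨Φ.symm z, rfl⟩, ?_⟩
      have := hΦ (Φ.symm z)
      rw [LinearEquiv.apply_symm_apply] at this
      refine Eq.trans this ?_
      funext p
      exact hz p
  have e1 := Submodule.Quotient.equiv _ _ Φ hmap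
  have e2 := Submodule.quotientPi (fun p : (s : Fin (k + 1)) × Fin (msMult n s).toNat =>
        Submodule.span ℤ (Set.range fun r => Ms n k ℓ lam p.1 r))
  have e3 := LinearEquiv.piCurry ℤ (fun (s : Fin (k + 1)) (_ : Fin (msMult n s).toNat) =>
    SmithGroup (Ms n k ℓ lam s))
  exact ⟨((e1.trans e2).trans e3).toAddEquiv⟩
end
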